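/- arXiv:2410.23440 — 10 statements merged into one kernel-verified Lean document; each statement's English description precedes it below -/
import Mathlib

section
/- Let λ = (λ_i)_{i≥1} be a nonincreasing sequence of positive real numbers, let u_γ := (1 + Σ_{i≥1} γ_i/λ_i)^{-1/2} for every multi-index γ ∈ Γ, and let π be a bijection from the positive integers onto Γ such that u_{π(1)} ≥ u_{π(2)} ≥ ⋯. Then for every positive integer p there exists s̄ ∈ ℕ (depending on λ_1,…,λ_p and p) such that for all s ≥ s̄ one has u_{π(s+1)} ≥ C · s^{-1/(2p)}, where C = (1/2)·(∏_{i=1}^p λ_i/i)^{1/(2p)}. In particular, (u_{π(s+1)})_s cannot decay with any algebraic rate as s → ∞. -/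
open Finset

/-- The set of multi-indices: finitely supported sequences of nonnegative
integers indexed by the positive integers. -/
abbrev MultiIndex : Type := ℕ+ →₀ ℕ

/-- The weight `u_γ = (1 + ∑_{i ≥ 1} γ_i / λ_i)^{-1/2}` associated to a
multi-index `γ` and a sequence `λ` of positive reals. -/
noncomputable def uweight (lam : ℕ+ → ℝ) (γ : MultiIndex) : ℝ :=
  (1 + ∑ i ∈ γ.support, (γ i : ℝ) / lam i) ^ (-(1 : ℝ) / 2)

theorem aux_prod_pnat (p : ℕ+) :
    ∏ i ∈ Finset.Icc (1 : ℕ+) p, (i : ℝ) = ((p : ℕ).factorial : ℝ) := by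
  rw [← Finset.prod_Ico_id_eq_factorial]
  push_cast
  refine Finset.prod_bij (fun i _ => (i : ℕ)) (fun i hi => ?_) (fun i _ j _ h => PNat.eq h)
    (fun b hb => ?_) (fun i _ => rfl)
  · have h : (i : ℕ) ≤ p := by exact_mod_cast (Finset.mem_Icc.1 hi).2
    exact Finset.mem_Ico.2 ⟨i.pos, Nat.lt_succ_of_le h⟩
  · have h := Finset.mem_Ico.1 hb
    exact ⟨⟨b, h.1⟩, Finset.mem_Icc.2 ⟨h.1, Nat.le_of_lt_succ h.2⟩, rfl⟩

theorem aux_fact (p : ℕ+) : ((p : ℕ) : ℝ) ^ (p : ℕ) < 3 ^ (p : ℕ) * ((p : ℕ).factorial : ℝ) := by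
  have h1 := Real.pow_div_factorial_le_exp ((p : ℕ) : ℝ) (by positivity) (p : ℕ)
  have hf : (0 : ℝ) < ((p : ℕ).factorial : ℝ) := by positivity
  rw [div_le_iff₀ hf] at h1
  have h2 : Real.exp ((p : ℕ) : ℝ) < 3 ^ (p : ℕ) := by
    rw [← Real.exp_one_pow]
    exact pow_lt_pow_left₀ (by linarith [Real.exp_one_lt_d9]) (Real.exp_pos 1).le p.ne_zero
  nlinarith

/-- **Impossibility of algebraic decay of `u_{π(s+1)}`.**  If `λ` is a
nonincreasing sequence of positive reals and `π` is a nonincreasing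
rearrangement of the weights `u_γ`, then for every `p` there is `s̄` such that
for all `s ≥ s̄` one has `u_{π(s+1)} ≥ (1/2) (∏_{i=1}^p λ_i / i)^{1/(2p)} · s^{-1/(2p)}`. -/
theorem impossibility_of_algebraic_decay
    (lam : ℕ+ → ℝ) (hpos : ∀ i, 0 < lam i) (hanti : Antitone lam)
    (π : ℕ+ → MultiIndex) (hbij : Function.Bijective π)
    (hdec : Antitone fun n => uweight lam (π n))
    (p : ℕ+) :
    ∃ sbar : ℕ+, ∀ s : ℕ+, sbar ≤ s →
      (1 / 2 : ℝ) * (∏ i ∈ Finset.Icc (1 : ℕ+) p, lam i / (i : ℝ)) ^ ((1 : ℝ) / (2 * (p : ℝ)))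
          * (s : ℝ) ^ (-(1 : ℝ) / (2 * (p : ℝ)))
        ≤ uweight lam (π (s + 1)) := by
  set P : ℝ := ∏ i ∈ Finset.Icc (1 : ℕ+) p, lam i / (i : ℝ) with hP
  have hP0 : 0 < P := Finset.prod_pos fun i _ => div_pos (hpos i) (by exact_mod_cast i.pos)
  have hp0 : (0 : ℝ) < (p : ℝ) := by exact_mod_cast p.pos
  obtain ⟨N, hN⟩ := exists_nat_ge P
  refine ⟨N.succPNat, fun s hs => ?_⟩
  have hs0 : (0 : ℝ) < (s : ℝ) := by exact_mod_cast s.pos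
  have hsP : P ≤ (s : ℝ) := by
    have h1 : (N.succPNat : ℕ) ≤ (s : ℕ) := by exact_mod_cast hs
    rw [Nat.succPNat_coe] at h1
    have h2 : (N : ℝ) ≤ ((s : ℕ) : ℝ) := by exact_mod_cast (Nat.le_of_succ_le h1)
    exact hN.trans h2
  set x : ℝ := ((s : ℝ) / P) ^ ((1 : ℝ) / (p : ℝ)) with hx
  have hsP1 : 1 ≤ (s : ℝ) / P := by rwa [le_div_iff₀ hP0, one_mul]
  have hx1 : 1 ≤ x := Real.one_le_rpow hsP1 (by positivity)
  have hxp : x ^ (p : ℕ) = (s : ℝ) / P := by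
    rw [hx, one_div]
    exact Real.rpow_inv_natCast_pow (by positivity) p.ne_zero
  have hc : (1 / 2 : ℝ) * P ^ ((1 : ℝ) / (2 * (p : ℝ))) * (s : ℝ) ^ (-(1 : ℝ) / (2 * (p : ℝ)))
      = (4 * x) ^ (-(1 : ℝ) / 2) := by
    rw [Real.mul_rpow (by norm_num) (by linarith), hx, ← Real.rpow_mul (by positivity),
      Real.div_rpow hs0.le hP0.le]
    have e1 : (1 : ℝ) / (p : ℝ) * (-(1 : ℝ) / 2) = -(1 : ℝ) / (2 * (p : ℝ)) := by
      field_simp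
    have e2 : (4 : ℝ) ^ (-(1 : ℝ) / 2) = 1 / 2 := by
      rw [show (4 : ℝ) = 2 ^ (2 : ℝ) by norm_num, ← Real.rpow_mul (by norm_num)]
      norm_num [Real.rpow_neg_one]
    have e3 : P ^ ((1 : ℝ) / (2 * (p : ℝ))) = (P ^ (-(1 : ℝ) / (2 * (p : ℝ))))⁻¹ := by
      rw [← Real.rpow_neg hP0.le]
      congr 1
      ring
    rw [e1, e2, e3]
    ring
  rw [hc]
  set T : ℝ := 4 * x - 1 with hT
  have hT3 : 3 * x ≤ T := by linarith
  have hT0 : 0 < T := by linarith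
  let B : Finset MultiIndex :=
    (Finset.Icc (1 : ℕ+) p).finsupp fun i => Finset.range (⌊lam i * T / p⌋₊ + 1)
  have hBu : ∀ γ ∈ B, (4 * x) ^ (-(1 : ℝ) / 2) ≤ uweight lam γ := by
    intro γ hγ
    obtain ⟨hsub, hmem⟩ := Finset.mem_finsupp_iff.1 hγ
    have hnn : ∀ i, 0 ≤ (γ i : ℝ) / lam i := fun i => div_nonneg (by positivity) (hpos i).le
    have hle : ∑ i ∈ γ.support, (γ i : ℝ) / lam i ≤ T := by
      calc ∑ i ∈ γ.support, (γ i : ℝ) / lam i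
          ≤ ∑ i ∈ Finset.Icc (1 : ℕ+) p, (γ i : ℝ) / lam i :=
            Finset.sum_le_sum_of_subset_of_nonneg hsub fun i _ _ => hnn i
        _ ≤ ∑ i ∈ Finset.Icc (1 : ℕ+) p, T / p := by
            refine Finset.sum_le_sum fun i hi => ?_
            have h1 : γ i ≤ ⌊lam i * T / p⌋₊ := Nat.lt_succ_iff.1 (Finset.mem_range.1 (hmem i hi))
            have hl := hpos i
            have h2 : (γ i : ℝ) ≤ lam i * T / p := (Nat.le_floor_iff (by positivity)).1 h1
            rw [div_le_iff₀ hl]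
            calc (γ i : ℝ) ≤ lam i * T / p := h2
              _ = T / p * lam i := by ring
        _ = T := by
            rw [Finset.sum_const, PNat.card_Icc]
            simp
            field_simp
    have hs1 : 0 ≤ ∑ i ∈ γ.support, (γ i : ℝ) / lam i := Finset.sum_nonneg fun i _ => hnn i
    unfold uweight
    exact Real.rpow_le_rpow_of_nonpos (by linarith) (by linarith) (by norm_num)
  have hcard : (s : ℝ) < (B.card : ℝ) := by
    have h1 : ∏ i ∈ Finset.Icc (1 : ℕ+) p, (lam i * T / p) ≤ (B.card : ℝ) := by
      rw [Finset.card_finsupp]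
      push_cast
      refine Finset.prod_le_prod (fun i _ => ?_) fun i _ => ?_
      · have := hpos i
        positivity
      · rw [Finset.card_range]
        push_cast
        exact (Nat.lt_floor_add_one _).le
    refine lt_of_lt_of_le ?_ h1
    have hf : (0 : ℝ) < ((p : ℕ).factorial : ℝ) := by positivity
    have h2 : ∏ i ∈ Finset.Icc (1 : ℕ+) p, (lam i * T / p)
        = P * ((p : ℕ).factorial : ℝ) * T ^ (p : ℕ) / (p : ℝ) ^ (p : ℕ) := by
      rw [hP, Finset.prod_div_distrib, Finset.prod_div_distrib, Finset.prod_mul_distrib,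
        aux_prod_pnat, Finset.prod_const, Finset.prod_const, PNat.card_Icc]
      simp only [PNat.one_coe, Nat.add_sub_cancel]
      field_simp
    rw [h2, lt_div_iff₀ (by positivity)]
    have h3 : (3 * x) ^ (p : ℕ) ≤ T ^ (p : ℕ) := pow_le_pow_left₀ (by linarith) hT3 _
    rw [mul_pow, hxp] at h3
    calc (s : ℝ) * (p : ℝ) ^ (p : ℕ)
        < s * (3 ^ (p : ℕ) * ((p : ℕ).factorial : ℝ)) := mul_lt_mul_of_pos_left (aux_fact p) hs0
      _ = P * ((p : ℕ).factorial : ℝ) * (3 ^ (p : ℕ) * ((s : ℝ) / P)) := by field_simp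
      _ ≤ P * ((p : ℕ).factorial : ℝ) * T ^ (p : ℕ) :=
          mul_le_mul_of_nonneg_left h3 (by positivity)
  by_contra hlt
  push Not at hlt
  classical
  have hsub : B ⊆ (Finset.Icc (1 : ℕ+) s).image π := by
    intro γ hγ
    obtain ⟨n, rfl⟩ := hbij.2 γ
    refine Finset.mem_image_of_mem _ (Finset.mem_Icc.2 ⟨one_le, ?_⟩)
    by_contra hn
    push Not at hn
    have h1 : s + 1 ≤ n := PNat.add_one_le_iff.2 hn
    have h2 := hdec h1
    have h3 := hBu _ hγ
    simp only at h2
    linarith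
  have h4 := (Finset.card_le_card hsub).trans Finset.card_image_le
  rw [PNat.card_Icc] at h4
  simp only [PNat.one_coe, Nat.add_sub_cancel] at h4
  have h5 : (B.card : ℝ) ≤ ((s : ℕ) : ℝ) := by exact_mod_cast h4
  linarith
end

section
/- Let α > 0 and λ_i := i^{-α} for every i ≥ 1, let u_γ := (1 + Σ_{i≥1} γ_i/λ_i)^{-1/2} for γ ∈ Γ, and let π be a bijection from the positive integers onto Γ with u_{π(1)} ≥ u_{π(2)} ≥ ⋯. Then for every δ > 0 and every η > 0 there exists s̄ ∈ ℕ (depending on α, δ, η) such that for all s ≥ s̄ one has u_{π(s+1)} ≤ η · (log s)^{-1/(2(1/α + δ))}. -/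
open Finset

noncomputable def wsum (lam : ℕ+ → ℝ) (γ : MultiIndex) : ℝ :=
  1 + ∑ i ∈ γ.support, (γ i : ℝ) / lam i

lemma wsum_ge (α : ℝ) (lam : ℕ+ → ℝ) (hlam : ∀ i : ℕ+, lam i = (i : ℝ) ^ (-α))
    (γ : MultiIndex) (i : ℕ+) : 1 + (γ i : ℝ) * (i : ℝ) ^ α ≤ wsum lam γ := by
  have hterm : ∀ j : ℕ+, (γ j : ℝ) / lam j = (γ j : ℝ) * (j : ℝ) ^ α := by
    intro j
    rw [hlam, Real.rpow_neg (by positivity), div_inv_eq_mul]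
  unfold wsum
  by_cases hi : i ∈ γ.support
  · have := Finset.single_le_sum (f := fun j => (γ j : ℝ) / lam j) (s := γ.support)
      (fun j _ => by rw [hterm]; positivity) hi
    rw [hterm] at this
    linarith
  · have h0 : γ i = 0 := by simpa using hi
    have : 0 ≤ ∑ j ∈ γ.support, (γ j : ℝ) / lam j :=
      Finset.sum_nonneg (fun j _ => by rw [hterm]; positivity)
    rw [h0]; simp only [Nat.cast_zero, zero_mul]; linarith

lemma count_bound (α : ℝ) (hα : 0 < α) (lam : ℕ+ → ℝ)
    (hlam : ∀ i : ℕ+, lam i = (i : ℝ) ^ (-α)) (π : ℕ+ → MultiIndex)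
    (hinj : Function.Injective π) (n : ℕ) (W : ℝ)
    (h : ∀ k : Fin n, wsum lam (π k.1.succPNat) ≤ W) :
    n ≤ (⌊W⌋₊ + 1) ^ ⌊W ^ (1 / α)⌋₊ := by
  have key : ∀ (k : Fin n) (i : ℕ+), (π k.1.succPNat) i < ⌊W⌋₊ + 1 := by
    intro k i
    have h1 := (wsum_ge α lam hlam (π k.1.succPNat) i).trans (h k)
    have h2 : (1 : ℝ) ≤ (i : ℝ) ^ α :=
      Real.one_le_rpow (by exact_mod_cast i.2) hα.le
    have h3 : ((π k.1.succPNat) i : ℝ) ≤ W := by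
      have : (0 : ℝ) ≤ ((π k.1.succPNat) i : ℝ) := by positivity
      nlinarith
    exact Nat.lt_succ_of_le (Nat.le_floor h3)
  have key2 : ∀ (k : Fin n) (i : ℕ+), ⌊W ^ (1 / α)⌋₊ < (i : ℕ) → (π k.1.succPNat) i = 0 := by
    intro k i hi
    by_contra hne
    have h1 := (wsum_ge α lam hlam (π k.1.succPNat) i).trans (h k)
    have hc : (1 : ℝ) ≤ ((π k.1.succPNat) i : ℝ) := by
      exact_mod_cast Nat.one_le_iff_ne_zero.mpr hne
    have h2 : (0 : ℝ) ≤ (i : ℝ) ^ α := by positivity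
    have h3 : (i : ℝ) ^ α ≤ W := by nlinarith
    have h4 : ((i : ℝ) ^ α) ^ (1 / α) ≤ W ^ (1 / α) :=
      Real.rpow_le_rpow h2 h3 (by positivity)
    rw [← Real.rpow_mul (by positivity), mul_one_div_cancel hα.ne', Real.rpow_one] at h4
    have h5 : (i : ℕ) ≤ ⌊W ^ (1 / α)⌋₊ := Nat.le_floor (by exact_mod_cast h4)
    omega
  let f : Fin n → (Fin ⌊W ^ (1 / α)⌋₊ → Fin (⌊W⌋₊ + 1)) :=
    fun k i => ⟨(π k.1.succPNat) i.1.succPNat, key k _⟩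
  have hf : Function.Injective f := by
    intro k l hkl
    have : π k.1.succPNat = π l.1.succPNat := by
      ext i
      by_cases hi : ⌊W ^ (1 / α)⌋₊ < (i : ℕ)
      · rw [key2 k i hi, key2 l i hi]
      · have hlt : i.natPred < ⌊W ^ (1 / α)⌋₊ := by
          have := PNat.natPred_add_one i
          omega
        have := congrFun hkl ⟨i.natPred, hlt⟩
        simpa [f] using this
    exact Fin.ext (Nat.succPNat_injective (hinj this))
  have := Fintype.card_le_of_injective f hf
  simpa using this

lemma analytic (a δ c : ℝ) (hδ : 0 < δ) (hc : 0 < c) :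
    ∃ W0 : ℝ, 1 ≤ W0 ∧ ∀ W, W0 ≤ W → W ^ a * Real.log (W + 1) ≤ c * W ^ (a + δ) := by
  have h := (isLittleO_log_rpow_atTop hδ).bound (half_pos hc)
  obtain ⟨B, hB⟩ := Filter.eventually_atTop.mp h
  refine ⟨max B 2, le_max_of_le_right (by norm_num), fun W hW => ?_⟩
  have h2 : 2 ≤ W := (le_max_right _ _).trans hW
  have h1 := hB W ((le_max_left _ _).trans hW)
  have hW0 : 0 < W := by linarith
  rw [Real.norm_of_nonneg (Real.log_nonneg (by linarith)),
    Real.norm_of_nonneg (by positivity)] at h1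
  have h3 : Real.log (W + 1) ≤ 2 * Real.log W := by
    have : Real.log (W + 1) ≤ Real.log (W ^ 2) := Real.log_le_log (by linarith) (by nlinarith)
    rwa [Real.log_pow] at this
  rw [Real.rpow_add hW0]
  have : 0 < W ^ a := by positivity
  nlinarith

/-- **Decay of `u_{π(s+1)}` for algebraic spectral decay `λ_i = i^{-α}`.**
For every `δ, η > 0` there exists `s̄` such that for all `s ≥ s̄`,
`u_{π(s+1)} ≤ η · (log s)^{-1/(2(1/α + δ))}`. -/
theorem uweight_decay_algebraic
    (α : ℝ) (hα : 0 < α)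
    (lam : ℕ+ → ℝ) (hlam : ∀ i : ℕ+, lam i = (i : ℝ) ^ (-α))
    (π : ℕ+ → MultiIndex) (hbij : Function.Bijective π)
    (hdec : Antitone fun n => uweight lam (π n))
    (δ η : ℝ) (hδ : 0 < δ) (hη : 0 < η) :
    ∃ sbar : ℕ+, ∀ s : ℕ+, sbar ≤ s →
      uweight lam (π (s + 1))
        ≤ η * (Real.log s) ^ (-(1 / (2 * (1 / α + δ))) : ℝ) := by
  have hw1 : ∀ γ, 1 ≤ wsum lam γ := fun γ =>
    le_trans (by have : (0:ℝ) ≤ (γ 1 : ℝ) * ((1 : ℕ+) : ℝ) ^ α := by positivity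
                 linarith) (wsum_ge α lam hlam γ 1)
  have hu : ∀ γ, uweight lam γ = wsum lam γ ^ (-(1 : ℝ) / 2) := fun γ => rfl
  have hp : 0 < 1 / α + δ := by positivity
  obtain ⟨W0, hW01, hW0⟩ := analytic (1 / α) δ (η ^ (2 * (1 / α + δ))) hδ (by positivity)
  have hcount : ∀ s : ℕ+, ∀ W, wsum lam (π (s + 1)) ≤ W →
      (s : ℕ) + 1 ≤ (⌊W⌋₊ + 1) ^ ⌊W ^ (1 / α)⌋₊ := by
    intro s W hW
    refine count_bound α hα lam hlam π hbij.1 _ W fun k => le_trans ?_ hW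
    have hle : k.1.succPNat ≤ s + 1 := by
      rw [← PNat.coe_le_coe]
      have := k.2
      simp only [Nat.succPNat_coe, PNat.add_coe, PNat.one_coe]
      omega
    have := hdec hle
    simp only [hu] at this
    exact (Real.rpow_le_rpow_iff_of_neg (by linarith [hw1 (π (s+1))])
      (by linarith [hw1 (π k.1.succPNat)]) (by norm_num)).mp this
  refine ⟨((⌊W0⌋₊ + 1) ^ ⌊W0 ^ (1 / α)⌋₊ + 1).succPNat, fun s hs => ?_⟩
  rw [← PNat.coe_le_coe, Nat.succPNat_coe] at hs
  set W := wsum lam (π (s + 1)) with hWdef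
  have hWW : W0 ≤ W := by
    by_contra hlt
    have := hcount s W0 (not_le.mp hlt).le
    omega
  have hWpos : 0 < W := by linarith
  have hc := hcount s W le_rfl
  have hs2 : 1 < (s : ℕ) := by omega
  have hLpos : 0 < Real.log s := Real.log_pos (by exact_mod_cast hs2)
  have hL : Real.log s ≤ η ^ (2 * (1 / α + δ)) * W ^ (1 / α + δ) := by
    refine le_trans ?_ (hW0 W hWW)
    have h1 : ((s : ℕ) : ℝ) ≤ ((⌊W⌋₊ : ℝ) + 1) ^ ⌊W ^ (1 / α)⌋₊ := by
      exact_mod_cast (Nat.le_succ _).trans hc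
    have h2 := Real.log_le_log (by positivity) h1
    rw [Real.log_pow] at h2
    refine h2.trans ?_
    have h3 : (⌊W⌋₊ : ℝ) ≤ W := Nat.floor_le hWpos.le
    have h4 : (⌊W ^ (1 / α)⌋₊ : ℝ) ≤ W ^ (1 / α) := Nat.floor_le (by positivity)
    have h5 : Real.log ((⌊W⌋₊ : ℝ) + 1) ≤ Real.log (W + 1) :=
      Real.log_le_log (by positivity) (by linarith)
    exact mul_le_mul h4 h5 (Real.log_nonneg (by linarith [Nat.cast_nonneg (α := ℝ) ⌊W⌋₊]))
      (by positivity)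
  have hfin := Real.rpow_le_rpow_of_nonpos hLpos hL
    (z := -(1 / (2 * (1 / α + δ)))) (by
      have : 0 < 1 / (2 * (1 / α + δ)) := by positivity
      linarith)
  rw [Real.mul_rpow (by positivity) (by positivity), ← Real.rpow_mul hη.le,
    ← Real.rpow_mul hWpos.le] at hfin
  generalize 1 / α + δ = p at *
  have e1 : 2 * p * -(1 / (2 * p)) = -1 := by field_simp
  have e2 : p * -(1 / (2 * p)) = -(1 : ℝ) / 2 := by field_simp
  rw [e1, e2, Real.rpow_neg_one] at hfin
  rw [hu, ← hWdef]
  calc W ^ (-(1 : ℝ) / 2) = η * (η⁻¹ * W ^ (-(1 : ℝ) / 2)) := by field_simp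
    _ ≤ _ := mul_le_mul_of_nonneg_left hfin hη.le
end

section
/- Let α, β > 0 and λ_i := exp(−α·i^β) for every i ≥ 1, let u_γ := (1 + Σ_{i≥1} γ_i/λ_i)^{-1/2} for γ ∈ Γ, and let π be a bijection from the positive integers onto Γ with u_{π(1)} ≥ u_{π(2)} ≥ ⋯. Then for every δ > 0 there exists s̄ ∈ ℕ (depending on α, β, δ) such that for all s ≥ s̄ one has u_{π(s+1)} ≤ exp( −(1/2) · α^{1/(β+1)} · ((β+1)/(β+δ))^{1/(1+1/β)} · (log s)^{1/(1+1/β)} ). -/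
open Finset

lemma tang_aux (β x y : ℝ) (hβ : 0 < β) (hx : 0 < x) (hy : 0 ≤ y) :
    x ^ (β + 1) + (β + 1) * x ^ β * (y - x) ≤ y ^ (β + 1) := by
  have h := one_add_mul_self_le_rpow_one_add (s := y / x - 1) (p := β + 1)
    (by have : 0 ≤ y / x := by positivity
        linarith) (by linarith)
  have e : 1 + (y / x - 1) = y / x := by ring
  rw [e, Real.div_rpow hy hx.le, le_div_iff₀ (by positivity)] at h
  refine le_trans (le_of_eq ?_) h
  rw [Real.rpow_add_one hx.ne']
  field_simp

lemma sum_aux (β : ℝ) (hβ : 0 < β) (n : ℕ) :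
    (n : ℝ) ^ (β + 1) ≤ (β + 1) * ∑ i ∈ range n, ((i : ℝ) + 1) ^ β := by
  induction n with
  | zero => simp [Real.zero_rpow (by linarith : β + 1 ≠ 0)]
  | succ n ih =>
    rw [sum_range_succ, mul_add]
    have := tang_aux β (n + 1) n hβ (by positivity) (by positivity)
    push_cast
    nlinarith

lemma count_aux (α β : ℝ) (hα : 0 < α) (hβ : 0 < β)
    (lam : ℕ+ → ℝ) (hlam : ∀ i : ℕ+, lam i = Real.exp (-(α * (i : ℝ) ^ β)))
    (L x : ℝ) (hx : 0 < x) (hL : α * x ^ β = L)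
    (S : Finset MultiIndex)
    (hS : ∀ γ ∈ S, ∑ i ∈ γ.support, (γ i : ℝ) / lam i ≤ Real.exp L) :
    (S.card : ℝ) ≤ Real.exp (x * (Real.log 2 + L * β / (β + 1))) := by
  have hlp : ∀ i, 0 < lam i := fun i => by rw [hlam]; positivity
  set n := ⌊x⌋₊ with hn
  let e : ℕ ↪ ℕ+ := ⟨Nat.succPNat, Nat.succPNat_injective⟩
  let I : Finset ℕ+ := (range n).map e
  let t : ℕ+ → Finset ℕ := fun i => range (⌊Real.exp L * lam i⌋₊ + 1)
  have hsub : S ⊆ I.finsupp t := by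
    intro γ hγ
    have hs := hS γ hγ
    have hle : ∀ i, (γ i : ℝ) ≤ Real.exp L * lam i := by
      intro i
      by_cases hi : i ∈ γ.support
      · have := single_le_sum (f := fun i => (γ i : ℝ) / lam i)
          (fun j _ => div_nonneg (Nat.cast_nonneg _) (hlp j).le) hi
        exact (div_le_iff₀ (hlp i)).1 (this.trans hs)
      · rw [Finsupp.notMem_support_iff.1 hi]
        have := hlp i
        push_cast; positivity
    rw [Finset.mem_finsupp_iff]
    refine ⟨?_, ?_⟩
    · intro i hi
      have h1 : (1 : ℝ) ≤ γ i := by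
        exact_mod_cast Nat.one_le_iff_ne_zero.2 (Finsupp.mem_support_iff.1 hi)
      have h2 := h1.trans (hle i)
      rw [hlam, ← Real.exp_add, ← hL] at h2
      have h3 := Real.one_le_exp_iff.1 h2
      have h4 : (i : ℝ) ^ β ≤ x ^ β := by
        have : α * (i : ℝ) ^ β ≤ α * x ^ β := by linarith
        exact le_of_mul_le_mul_left this hα
      have h5 : ((i : ℕ) : ℝ) ≤ x :=
        (Real.rpow_le_rpow_iff (by positivity) hx.le hβ).1 h4
      have h6 : (i : ℕ) ≤ n := Nat.le_floor h5
      simp only [I, Finset.mem_map, mem_range]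
      have := i.pos
      exact ⟨i.natPred, by rw [← PNat.natPred_add_one i] at h6; omega, PNat.succPNat_natPred i⟩
    · intro i hi
      simp only [t, mem_range]
      exact Nat.lt_succ_of_le (Nat.le_floor (hle i))
  have hc := card_le_card hsub
  rw [Finset.card_finsupp] at hc
  simp only [I, t, Finset.prod_map, card_range] at hc
  have hn_le : (n : ℝ) ≤ x := Nat.floor_le hx.le
  have h1 : (S.card : ℝ) ≤ ∏ i ∈ range n,
      Real.exp (Real.log 2 + L - α * ((i : ℝ) + 1) ^ β) := by
    calc (S.card : ℝ) ≤ ((∏ i ∈ range n, (⌊Real.exp L * lam (e i)⌋₊ + 1) : ℕ) : ℝ) := by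
          exact_mod_cast hc
      _ ≤ _ := by
          push_cast
          refine prod_le_prod (fun i _ => by positivity) ?_
          intro i hi
          have hi' : i + 1 ≤ n := mem_range.1 hi
          have hix : (i : ℝ) + 1 ≤ x := le_trans (by exact_mod_cast hi') hn_le
          have hp : ((i : ℝ) + 1) ^ β ≤ x ^ β :=
            Real.rpow_le_rpow (by positivity) hix hβ.le
          have hei : ((e i : ℕ+) : ℝ) = (i : ℝ) + 1 := by
            simp [e]
          have heq : Real.exp L * lam (e i) = Real.exp (L - α * ((i : ℝ) + 1) ^ β) := by
            rw [hlam, hei, ← Real.exp_add]; congr 1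
          have hge : 1 ≤ Real.exp (L - α * ((i : ℝ) + 1) ^ β) := by
            apply Real.one_le_exp
            rw [← hL]
            nlinarith
          rw [heq, add_sub_assoc, Real.exp_add, Real.exp_log (by norm_num)]
          have := Nat.floor_le (Real.exp_nonneg (L - α * ((i : ℝ) + 1) ^ β))
          linarith
  refine h1.trans ?_
  rw [← Real.exp_sum]
  apply Real.exp_le_exp.2
  rw [sum_sub_distrib, ← mul_sum, sum_const, card_range, nsmul_eq_mul]
  have hsum := sum_aux β hβ n
  have ht := tang_aux β x n hβ hx (by positivity)
  rw [Real.rpow_add_one hx.ne'] at ht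
  set Q := ∑ i ∈ range n, ((i : ℝ) + 1) ^ β
  have hlog : 0 < Real.log 2 := Real.log_pos (by norm_num)
  have h2 : (n : ℝ) * Real.log 2 ≤ x * Real.log 2 := by nlinarith
  have h3 : (n : ℝ) * L - α * Q ≤ x * (L * β / (β + 1)) := by
    rw [← mul_div_assoc, le_div_iff₀ (by linarith)]
    have h4 := mul_le_mul_of_nonneg_left (ht.trans hsum) hα.le
    rw [← hL]
    nlinarith
  linarith

/-- **Decay of `u_{π(s+1)}` for exponential spectral decay `λ_i = e^{-α i^β}`.**
For every `δ > 0` there exists `s̄` such that for all `s ≥ s̄`,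
`u_{π(s+1)} ≤ exp(-(1/2) α^{1/(β+1)} ((β+1)/(β+δ))^{1/(1+1/β)} (log s)^{1/(1+1/β)})`. -/
theorem uweight_decay_exponential
    (α β : ℝ) (hα : 0 < α) (hβ : 0 < β)
    (lam : ℕ+ → ℝ) (hlam : ∀ i : ℕ+, lam i = Real.exp (-(α * (i : ℝ) ^ β)))
    (π : ℕ+ → MultiIndex) (hbij : Function.Bijective π)
    (hdec : Antitone fun n => uweight lam (π n))
    (δ : ℝ) (hδ : 0 < δ) :
    ∃ sbar : ℕ+, ∀ s : ℕ+, sbar ≤ s →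
      uweight lam (π (s + 1))
        ≤ Real.exp (-(1 / 2 * α ^ ((1 : ℝ) / (β + 1))
            * ((β + 1) / (β + δ)) ^ ((1 : ℝ) / (1 + 1 / β))
            * (Real.log s) ^ ((1 : ℝ) / (1 + 1 / β)))) := by
  have hb1 : 0 < β + 1 := by linarith
  have hbd : 0 < β + δ := by linarith
  set κ : ℝ := (1 : ℝ) / (1 + 1 / β) with hκ
  have hκ' : κ = β / (β + 1) := by rw [hκ]; field_simp
  have hκ0 : 0 < κ := by rw [hκ']; positivity
  set C : ℝ := α ^ ((1 : ℝ) / (β + 1)) * ((β + 1) / (β + δ)) ^ κ with hC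
  have hC0 : 0 < C := by positivity
  have hlim : Filter.Tendsto (fun s : ℕ => C * (Real.log s) ^ κ) Filter.atTop Filter.atTop :=
    Filter.Tendsto.const_mul_atTop hC0 ((tendsto_rpow_atTop hκ0).comp
      (Real.tendsto_log_atTop.comp tendsto_natCast_atTop_atTop))
  obtain ⟨N, hN⟩ := Filter.eventually_atTop.1
    (hlim.eventually_ge_atTop (Real.log 2 * (β + 1) / δ))
  refine ⟨(N + 1).succPNat, fun s hs => ?_⟩
  have hsN : N + 2 ≤ (s : ℕ) := by
    have := PNat.coe_le_coe _ _ |>.2 hs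
    have h2 : N + 1 < (s : ℕ) := by simpa using this
    omega
  have hLs := hN s (by omega)
  set L : ℝ := C * (Real.log (s : ℕ)) ^ κ with hLdef
  have hlogs : 0 < Real.log ((s : ℕ) : ℝ) := Real.log_pos (by
    have : 1 < (s : ℕ) := by omega
    exact_mod_cast this)
  have hL0 : 0 < L := by positivity
  by_contra hcon
  rw [not_le] at hcon
  have hexp : -(1 / 2 * α ^ ((1 : ℝ) / (β + 1)) * ((β + 1) / (β + δ)) ^ κ
      * (Real.log ((s : ℕ) : ℝ)) ^ κ) = L * (-(1 : ℝ) / 2) := by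
    rw [hLdef, hC]; ring
  rw [hexp, Real.exp_mul] at hcon
  set x : ℝ := (L / α) ^ (1 / β) with hxdef
  have hx : 0 < x := by positivity
  have hLx : α * x ^ β = L := by
    rw [hxdef, ← Real.rpow_mul (by positivity), one_div_mul_cancel hβ.ne', Real.rpow_one]
    field_simp
  have hlp : ∀ i, 0 < lam i := fun i => by rw [hlam]; positivity
  have hcount := count_aux α β hα hβ lam hlam L x hx hLx
    ((Finset.Icc 1 (s + 1)).map ⟨π, hbij.1⟩) (by
      intro γ hγ
      obtain ⟨k, hk, rfl⟩ := Finset.mem_map.1 hγ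
      have hk2 := (Finset.mem_Icc.1 hk).2
      have h1 := lt_of_lt_of_le hcon (hdec hk2)
      simp only [uweight] at h1
      have hnn : 0 ≤ ∑ i ∈ (π k).support, ((π k) i : ℝ) / lam i :=
        Finset.sum_nonneg fun i _ => div_nonneg (Nat.cast_nonneg _) (hlp i).le
      have h2 := (Real.rpow_lt_rpow_iff_of_neg (Real.exp_pos L) (by linarith)
        (by norm_num : (-(1 : ℝ) / 2) < 0)).1 h1
      simp only [Function.Embedding.coeFn_mk]
      linarith)
  rw [Finset.card_map, PNat.card_Icc] at hcount
  have hkey : x * (Real.log 2 + L * β / (β + 1)) ≤ Real.log ((s : ℕ) : ℝ) := by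
    have h1 : Real.log 2 + L * β / (β + 1) ≤ L * ((β + δ) / (β + 1)) := by
      rw [div_le_iff₀ hδ] at hLs
      rw [← mul_div_assoc, ← sub_nonneg]
      have : L * (β + δ) / (β + 1) - (Real.log 2 + L * β / (β + 1))
        = (L * δ - Real.log 2 * (β + 1)) / (β + 1) := by field_simp; ring
      rw [this]
      exact div_nonneg (by linarith) hb1.le
    refine (mul_le_mul_of_nonneg_left h1 hx.le).trans (le_of_eq ?_)
    apply Real.log_injOn_pos (Set.mem_Ioi.2 (by positivity)) (Set.mem_Ioi.2 hlogs)
    have hLlog : Real.log L = 1 / (β + 1) * Real.log α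
        + κ * (Real.log (β + 1) - Real.log (β + δ)) + κ * Real.log (Real.log ((s : ℕ) : ℝ)) := by
      rw [hLdef, hC, Real.log_mul (by positivity) (by positivity),
        Real.log_mul (by positivity) (by positivity), Real.log_rpow hα,
        Real.log_rpow (by positivity), Real.log_rpow hlogs, Real.log_div hb1.ne' hbd.ne']
    rw [Real.log_mul hx.ne' (by positivity), Real.log_mul hL0.ne' (by positivity),
      Real.log_div hbd.ne' hb1.ne', hxdef, Real.log_rpow (by positivity),
      Real.log_div hL0.ne' hα.ne', hLlog, hκ']
    field_simp
    ring
  have h3 := hcount.trans (Real.exp_le_exp.2 hkey)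
  rw [Real.exp_log (by exact_mod_cast s.pos)] at h3
  have h4 : ((s + 1 : ℕ+) : ℕ) + 1 - ((1 : ℕ+) : ℕ) ≤ (s : ℕ) := by exact_mod_cast h3
  simp at h4
end

section
/- Let α > 0 and λ_i := exp(−exp(α·i)) for every i ≥ 1, let u_γ := (1 + Σ_{i≥1} γ_i/λ_i)^{-1/2} for γ ∈ Γ, and let π be a bijection from the positive integers onto Γ with u_{π(1)} ≥ u_{π(2)} ≥ ⋯. Then for every δ > 0 and every η > 0 there exists s̄ ∈ ℕ (depending on α, δ, η) such that for all s ≥ s̄ one has u_{π(s+1)} ≤ exp( −η · (log s)^{1/(1+δ)} ). -/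
open Finset

lemma aux_asymp (α δ η : ℝ) (hα : 0 < α) (hδ : 0 < δ) (hη : 0 < η) :
    ∃ L0 : ℝ, ∀ L : ℝ, L0 ≤ L → 1 ≤ 2 * η * L ^ ((1 : ℝ) / (1 + δ)) ∧
      Real.log (2 * η * L ^ ((1 : ℝ) / (1 + δ))) / α * (2 * η * L ^ ((1 : ℝ) / (1 + δ)) + 1) ≤ L := by
  have hp : 0 < (1 : ℝ) / (1 + δ) := by positivity
  have hc : 0 < α / (2 * (2 * η) ^ (1 + δ)) := by positivity
  have h1 : ∀ᶠ X : ℝ in Filter.atTop,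
      1 ≤ X ∧ ‖Real.log X‖ ≤ α / (2 * (2 * η) ^ (1 + δ)) * ‖X ^ δ‖ :=
    (Filter.eventually_ge_atTop 1).and ((isLittleO_log_rpow_atTop hδ).bound hc)
  have ht : Filter.Tendsto (fun L : ℝ => 2 * η * L ^ ((1 : ℝ) / (1 + δ))) Filter.atTop Filter.atTop :=
    (tendsto_rpow_atTop hp).const_mul_atTop (by positivity)
  obtain ⟨L0, h⟩ := Filter.eventually_atTop.1 ((ht.eventually h1).and (Filter.eventually_ge_atTop 0))
  refine ⟨L0, fun L hL => ?_⟩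
  obtain ⟨⟨hX, hb⟩, hL0⟩ := h L hL
  refine ⟨hX, ?_⟩
  have hLX : (2 * η * L ^ ((1 : ℝ) / (1 + δ))) ^ (1 + δ) = (2 * η) ^ (1 + δ) * L := by
    rw [Real.mul_rpow (by positivity) (by positivity), ← Real.rpow_mul hL0,
      one_div_mul_cancel (by positivity), Real.rpow_one]
  generalize 2 * η * L ^ ((1 : ℝ) / (1 + δ)) = X at *
  have hX0 : 0 < X := by linarith
  rw [Real.rpow_add hX0, Real.rpow_one] at hLX
  have hlog : 0 ≤ Real.log X := Real.log_nonneg hX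
  rw [Real.norm_of_nonneg hlog, Real.norm_of_nonneg (by positivity)] at hb
  have hK : 0 < (2 * η) ^ (1 + δ) := by positivity
  generalize (2 * η) ^ (1 + δ) = K at *
  calc Real.log X / α * (X + 1) ≤ (α / (2 * K) * X ^ δ) / α * (2 * X) := by
        gcongr; linarith
    _ = (X * X ^ δ) / K := by field_simp
    _ = L := by rw [hLX]; field_simp

/-- **Decay of `u_{π(s+1)}` for double exponential spectral decay
`λ_i = e^{-e^{α i}}`.**  For every `δ, η > 0` there exists `s̄` such that for
all `s ≥ s̄`, `u_{π(s+1)} ≤ exp(-η (log s)^{1/(1+δ)})`. -/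
theorem uweight_decay_double_exponential
    (α : ℝ) (hα : 0 < α)
    (lam : ℕ+ → ℝ) (hlam : ∀ i : ℕ+, lam i = Real.exp (-Real.exp (α * (i : ℝ))))
    (π : ℕ+ → MultiIndex) (hbij : Function.Bijective π)
    (hdec : Antitone fun n => uweight lam (π n))
    (δ η : ℝ) (hδ : 0 < δ) (hη : 0 < η) :
    ∃ sbar : ℕ+, ∀ s : ℕ+, sbar ≤ s →
      uweight lam (π (s + 1))
        ≤ Real.exp (-(η * (Real.log s) ^ ((1 : ℝ) / (1 + δ)))) := by
  obtain ⟨L0, hL0⟩ := aux_asymp α δ η hα hδ hη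
  refine ⟨⟨⌈Real.exp L0⌉₊ + 1, by omega⟩, fun s hs => ?_⟩
  have hsL : L0 ≤ Real.log (s : ℝ) := by
    rw [Real.le_log_iff_exp_le (by exact_mod_cast s.pos)]
    have h2 : ⌈Real.exp L0⌉₊ + 1 ≤ (s : ℕ) := hs
    calc Real.exp L0 ≤ (⌈Real.exp L0⌉₊ : ℝ) := Nat.le_ceil _
      _ ≤ ((s : ℕ) : ℝ) := by exact_mod_cast (by omega)
  obtain ⟨hX, hfin⟩ := hL0 _ hsL
  by_contra hcon
  push Not at hcon
  have hXdef : -(η * (Real.log (s : ℝ)) ^ ((1 : ℝ) / (1 + δ)))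
      = (2 * η * (Real.log (s : ℝ)) ^ ((1 : ℝ) / (1 + δ))) * (-(1 : ℝ) / 2) := by ring
  rw [hXdef] at hcon
  generalize 2 * η * (Real.log (s : ℝ)) ^ ((1 : ℝ) / (1 + δ)) = X at *
  have hlampos : ∀ i, 0 < lam i := fun i => by rw [hlam]; positivity
  -- every coordinate is controlled
  have key : ∀ n : ℕ+, n ≤ s + 1 → ∀ i : ℕ+, (π n i : ℝ) * Real.exp (Real.exp (α * (i : ℝ))) ≤ Real.exp X := by
    intro n hn i
    have h1 : Real.exp (X * (-(1 : ℝ) / 2)) < uweight lam (π n) := lt_of_lt_of_le hcon (hdec hn)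
    unfold uweight at h1
    rw [Real.exp_mul] at h1
    have hnn : ∀ j ∈ (π n).support, 0 ≤ (π n j : ℝ) / lam j := fun j _ =>
      div_nonneg (Nat.cast_nonneg _) (hlampos j).le
    have hS : 0 ≤ ∑ j ∈ (π n).support, (π n j : ℝ) / lam j := Finset.sum_nonneg hnn
    have h2 := (Real.rpow_lt_rpow_iff_of_neg (Real.exp_pos X)
      (by linarith : 0 < 1 + ∑ j ∈ (π n).support, (π n j : ℝ) / lam j) (by norm_num : -(1:ℝ)/2 < 0)).1 h1
    by_cases hi : i ∈ (π n).support
    · have h3 := Finset.single_le_sum hnn hi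
      have h4 : (π n i : ℝ) / lam i = (π n i : ℝ) * Real.exp (Real.exp (α * (i : ℝ))) := by
        rw [hlam, Real.exp_neg, div_inv_eq_mul]
      linarith
    · rw [Finsupp.notMem_support_iff.1 hi]
      simp [Real.exp_nonneg]
  set N := ⌊Real.log X / α⌋₊ with hN
  set M := ⌊Real.exp X⌋₊ with hM
  have hX0 : 0 < X := by linarith
  have hle : ∀ n : ℕ+, n ≤ s + 1 → ∀ i : ℕ+, π n i ≤ M := by
    intro n hn i
    apply Nat.le_floor
    refine le_trans ?_ (key n hn i)
    exact le_mul_of_one_le_right (Nat.cast_nonneg _) (Real.one_le_exp (Real.exp_nonneg _))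
  have hzero : ∀ n : ℕ+, n ≤ s + 1 → ∀ i : ℕ+, N < i → π n i = 0 := by
    intro n hn i hi
    by_contra h0
    have h1 : (1 : ℝ) ≤ (π n i : ℝ) := by exact_mod_cast Nat.one_le_iff_ne_zero.2 h0
    have h2 : Real.exp (Real.exp (α * (i : ℝ))) ≤ Real.exp X :=
      le_trans (le_mul_of_one_le_left (Real.exp_nonneg _) h1) (key n hn i)
    have h3 := (Real.le_log_iff_exp_le hX0).2 (Real.exp_le_exp.1 h2)
    have h4 : ((i : ℕ) : ℝ) ≤ Real.log X / α := by
      rw [le_div_iff₀ hα]; linarith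
    have := Nat.le_floor h4
    omega
  have hb : ∀ k : Fin (s + 1 : ℕ), Nat.succPNat k ≤ s + 1 := fun k => by
    rw [← PNat.coe_le_coe, Nat.succPNat_coe, PNat.add_coe, PNat.one_coe]
    have := k.2
    omega
  let f : Fin (s + 1 : ℕ) → (Fin N → Fin (M + 1)) := fun k j =>
    ⟨π (Nat.succPNat k) (Nat.succPNat j), Nat.lt_succ_of_le (hle _ (hb k) _)⟩
  have hf : Function.Injective f := by
    intro a b hab
    have h : π (Nat.succPNat a) = π (Nat.succPNat b) := by
      ext i
      by_cases hi : N < i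
      · rw [hzero _ (hb a) i hi, hzero _ (hb b) i hi]
      · have hip := i.pos
        have h1 := congrArg Fin.val (congrFun hab ⟨(i : ℕ) - 1, by omega⟩)
        have h2 : Nat.succPNat ((i : ℕ) - 1) = i := by
          apply PNat.eq
          rw [Nat.succPNat_coe]
          omega
        simp only [f, h2] at h1
        exact h1
    exact Fin.ext (Nat.succPNat_injective (hbij.1 h))
  have hcard := Fintype.card_le_of_injective f hf
  simp only [Fintype.card_fin, Fintype.card_fun] at hcard
  have hspos : (0 : ℝ) < (s : ℝ) := by exact_mod_cast s.pos
  have h1 : (s : ℝ) < ((M : ℝ) + 1) ^ N := by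
    have : (s : ℕ) < (M + 1) ^ N := by omega
    exact_mod_cast this
  have h2 : Real.log (s : ℝ) < N * Real.log ((M : ℝ) + 1) := by
    rw [← Real.log_pow]
    exact Real.log_lt_log hspos h1
  have h3 : Real.log ((M : ℝ) + 1) ≤ X + 1 := by
    rw [Real.log_le_iff_le_exp (by positivity), Real.exp_add]
    have a1 : (M : ℝ) ≤ Real.exp X := Nat.floor_le (Real.exp_nonneg _)
    have a2 : 1 ≤ Real.exp X := Real.one_le_exp hX0.le
    have a3 : 2 ≤ Real.exp 1 := by have := Real.add_one_le_exp 1; linarith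
    nlinarith
  have h4 : (N : ℝ) ≤ Real.log X / α := Nat.floor_le (div_nonneg (Real.log_nonneg hX) hα.le)
  have h5 : (N : ℝ) * Real.log ((M : ℝ) + 1) ≤ Real.log X / α * (X + 1) := by
    refine mul_le_mul h4 h3 (Real.log_nonneg (by linarith [Nat.cast_nonneg (α := ℝ) M])) ?_
    exact div_nonneg (Real.log_nonneg hX) hα.le
  linarith
end

section
/- Let α > 0 and λ_i := exp(−exp(α·i)) for every i ≥ 1, let u_γ := (1 + Σ_{i≥1} γ_i/λ_i)^{-1/2} for γ ∈ Γ, and let π be a bijection from the positive integers onto Γ with u_{π(1)} ≥ u_{π(2)} ≥ ⋯. Then for every η > 0 there exist a constant c > 0 and s̄ ∈ ℕ (depending on α and η) such that for all s ≥ s̄ one has u_{π(s+1)} ≥ c · (s+1)^{−η}. -/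
open Finset

/-- **Lower bound for `u_{π(s+1)}` for double exponential spectral decay
`λ_i = e^{-e^{α i}}`.**  For every `η > 0` there exist `c > 0` and `s̄` such
that for all `s ≥ s̄`, `u_{π(s+1)} ≥ c · (s+1)^{-η}`. -/
theorem uweight_lower_bound_double_exponential
    (α : ℝ) (hα : 0 < α)
    (lam : ℕ+ → ℝ) (hlam : ∀ i : ℕ+, lam i = Real.exp (-Real.exp (α * (i : ℝ))))
    (π : ℕ+ → MultiIndex) (hbij : Function.Bijective π)
    (hdec : Antitone fun n => uweight lam (π n))
    (η : ℝ) (hη : 0 < η) :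
    ∃ c : ℝ, 0 < c ∧ ∃ sbar : ℕ+, ∀ s : ℕ+, sbar ≤ s →
      c * ((s : ℝ) + 1) ^ (-η) ≤ uweight lam (π (s + 1)) := by
  have hpos : ∀ i, 0 < lam i := fun i => by rw [hlam]; exact Real.exp_pos _
  obtain ⟨d, hd⟩ := exists_nat_gt (1 / (2 * η))
  have hd0 : (0 : ℝ) < d := lt_trans (by positivity) hd
  have hdn : d ≠ 0 := by rintro rfl; simp at hd0
  obtain ⟨T, hT⟩ := Infinite.exists_subset_card_eq ℕ+ d
  set C : ℝ := ∑ i ∈ T, 1 / lam i with hC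
  have hC0 : 0 ≤ C := Finset.sum_nonneg fun i _ => (div_pos one_pos (hpos i)).le
  refine ⟨(1 + C) ^ (-(1 : ℝ) / 2), by positivity, 1, fun s _ => ?_⟩
  set x : ℝ := (s : ℝ) + 1 with hx
  have hx1 : 1 ≤ x := by rw [hx]; linarith [Nat.cast_nonneg (α := ℝ) (s : ℕ)]
  have hx0 : 0 < x := by linarith
  set y : ℝ := x ^ (1 / (d : ℝ)) with hy
  have hy1 : 1 ≤ y := Real.one_le_rpow hx1 (by positivity)
  have hyd : y ^ d = x := by
    rw [hy, ← Real.rpow_natCast, ← Real.rpow_mul hx0.le, one_div_mul_cancel hd0.ne', Real.rpow_one]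
  set m : ℕ := ⌊y⌋₊ with hm
  have hmy : (m : ℝ) ≤ y := Nat.floor_le (by linarith)
  have hym : y < m + 1 := Nat.lt_floor_add_one y
  set S : Finset MultiIndex := T.finsupp (fun _ => Finset.range (m + 1)) with hS
  have hcard : S.card = (m + 1) ^ d := by
    rw [hS, Finset.card_finsupp]; simp [hT]
  have hlt : (s : ℕ) < S.card := by
    rw [hcard]
    have h1 : x ≤ ((m : ℝ) + 1) ^ d := by
      rw [← hyd]; exact pow_le_pow_left₀ (by linarith) hym.le d
    have h2 : ((s : ℕ) : ℝ) < (((m + 1) ^ d : ℕ) : ℝ) := by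
      push_cast; linarith
    exact_mod_cast h2
  have hex : ∃ n : ℕ+, s + 1 ≤ n ∧ π n ∈ S := by
    by_contra hcon
    push Not at hcon
    have hsub : S ⊆ (Finset.Icc 1 s).image π := by
      intro γ hγ
      obtain ⟨n, rfl⟩ := hbij.2 γ
      refine Finset.mem_image_of_mem _ (Finset.mem_Icc.2 ⟨n.one_le, ?_⟩)
      by_contra hn
      exact hcon n (PNat.add_one_le_iff.2 (not_le.1 hn)) hγ
    have h1 := (Finset.card_le_card hsub).trans Finset.card_image_le
    rw [PNat.card_Icc] at h1
    simp at h1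
    omega
  obtain ⟨n, hn, hnS⟩ := hex
  refine le_trans ?_ (hdec hn)
  rw [hS, Finset.mem_finsupp_iff] at hnS
  obtain ⟨hsup, hval⟩ := hnS
  have hsum : ∑ i ∈ (π n).support, ((π n) i : ℝ) / lam i ≤ y * C := by
    calc ∑ i ∈ (π n).support, ((π n) i : ℝ) / lam i
        ≤ ∑ i ∈ T, ((π n) i : ℝ) / lam i :=
          Finset.sum_le_sum_of_subset_of_nonneg hsup
            fun i _ _ => div_nonneg (Nat.cast_nonneg _) (hpos i).le
      _ ≤ ∑ i ∈ T, y * (1 / lam i) := by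
          refine Finset.sum_le_sum fun i hi => ?_
          have h1 : (π n) i ≤ m := Nat.lt_succ_iff.1 (Finset.mem_range.1 (hval i hi))
          have h2 : ((π n) i : ℝ) ≤ y := le_trans (by exact_mod_cast h1) hmy
          rw [mul_one_div]
          exact div_le_div_of_nonneg_right h2 (hpos i).le
      _ = y * C := by rw [hC, Finset.mul_sum]
  have hsum0 : 0 ≤ ∑ i ∈ (π n).support, ((π n) i : ℝ) / lam i :=
    Finset.sum_nonneg fun i _ => div_nonneg (Nat.cast_nonneg _) (hpos i).le
  have hle : 1 + ∑ i ∈ (π n).support, ((π n) i : ℝ) / lam i ≤ (1 + C) * y := by nlinarith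
  have hfin : ((1 + C) * y) ^ (-(1 : ℝ) / 2) ≤ uweight lam (π n) :=
    Real.rpow_le_rpow_of_nonpos (by linarith) hle (by norm_num)
  refine le_trans ?_ hfin
  rw [Real.mul_rpow (by linarith) (by linarith)]
  refine mul_le_mul_of_nonneg_left ?_ (by positivity)
  rw [hy, ← Real.rpow_mul hx0.le]
  refine Real.rpow_le_rpow_of_exponent_le hx1 ?_
  have h3 : 1 / (d : ℝ) < 2 * η := by
    rw [div_lt_iff₀ (by positivity)] at hd
    rw [div_lt_iff₀ hd0]
    linarith
  linarith
end

section
/- Let d ≥ 1 be an integer and a_1, …, a_d be real numbers with 0 < a_1 ≤ a_2 ≤ ⋯ ≤ a_d. Then the anisotropic total degree index set Λ := {ν ∈ ℕ_0^d : Σ_{i=1}^d a_i ν_i ≤ 1} is finite and its cardinality satisfies ∏_{i=1}^d 1/(a_i · i) ≤ |Λ| ≤ ∏_{i=1}^d (1/(a_i · i) + 1). -/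
open Finset

def tdS (d : ℕ) (a : Fin d → ℝ) (t : ℝ) : Set (Fin d → ℕ) :=
  {ν | ∑ i, a i * (ν i : ℝ) ≤ t}

lemma tdS_finite (d : ℕ) (a : Fin d → ℝ) (hpos : ∀ i, 0 < a i) (t : ℝ) :
    (tdS d a t).Finite := by
  refine (Set.finite_Iic (fun i => ⌊t / a i⌋₊)).subset ?_
  intro ν hν i
  have h1 : a i * (ν i : ℝ) ≤ ∑ j, a j * (ν j : ℝ) :=
    Finset.single_le_sum (f := fun j => a j * (ν j : ℝ))
      (fun j _ => mul_nonneg (hpos j).le (Nat.cast_nonneg _)) (Finset.mem_univ i)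
  have h2 : a i * (ν i : ℝ) ≤ t := h1.trans hν
  apply Nat.le_floor
  rw [le_div_iff₀ (hpos i)]
  linarith

lemma tdS_neg (d : ℕ) (a : Fin d → ℝ) (hpos : ∀ i, 0 < a i) (t : ℝ) (ht : t < 0) :
    (tdS d a t).ncard = 0 := by
  have : tdS d a t = ∅ := by
    ext ν
    simp only [tdS, Set.mem_ofPred_eq, Set.mem_empty_iff_false, iff_false, not_le]
    exact ht.trans_le (Finset.sum_nonneg
      (fun j _ => mul_nonneg (hpos j).le (Nat.cast_nonneg _)))
  rw [this, Set.ncard_empty]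

lemma tdS_zero (a : Fin 0 → ℝ) (t : ℝ) (ht : 0 ≤ t) : (tdS 0 a t).ncard = 1 := by
  have : tdS 0 a t = {fun i => i.elim0} := by
    ext ν
    simp only [tdS, Set.mem_ofPred_eq, Set.mem_singleton_iff, Finset.univ_eq_empty,
      Finset.sum_empty, ht, true_iff]
    exact Subsingleton.elim _ _
  rw [this, Set.ncard_singleton]

lemma tdS_rec (d : ℕ) (a : Fin (d+1) → ℝ) (hpos : ∀ i, 0 < a i) (t : ℝ) :
    (tdS (d+1) a t).ncard = (tdS d (fun i => a i.castSucc) t).ncard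
      + (tdS (d+1) a (t - a (Fin.last d))).ncard := by
  let f : (Fin d → ℕ) → (Fin (d+1) → ℕ) := fun ν => Fin.snoc (α := fun _ => ℕ) ν 0
  let g : (Fin (d+1) → ℕ) → (Fin (d+1) → ℕ) := fun ν =>
    Fin.snoc (α := fun _ => ℕ) (fun i => ν i.castSucc) (ν (Fin.last d) + 1)
  have hf : Function.Injective f := by
    intro x y h
    funext i
    have := congrFun h i.castSucc
    simpa [f] using this
  have hg : Function.Injective g := by
    intro x y h
    funext i
    refine Fin.lastCases ?_ (fun i => ?_) i
    · have := congrFun h (Fin.last d)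
      simpa [g] using this
    · have := congrFun h i.castSucc
      simpa [g] using this
  have hU : tdS (d+1) a t = f '' (tdS d (fun i => a i.castSucc) t)
      ∪ g '' (tdS (d+1) a (t - a (Fin.last d))) := by
    ext ν
    constructor
    · intro hν
      simp only [tdS, Set.mem_ofPred_eq, Fin.sum_univ_castSucc] at hν
      rcases h0 : ν (Fin.last d) with _ | k
      · left
        refine ⟨fun i => ν i.castSucc, ?_, ?_⟩
        · simpa [tdS, h0] using hν
        · funext i
          refine Fin.lastCases ?_ (fun i => ?_) i <;> simp [f, h0]
      · right
        refine ⟨Fin.snoc (α := fun _ => ℕ) (fun i => ν i.castSucc) k, ?_, ?_⟩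
        · rw [h0] at hν
          push_cast at hν
          simp only [tdS, Set.mem_ofPred_eq, Fin.sum_univ_castSucc, Fin.snoc_castSucc,
            Fin.snoc_last]
          linarith
        · funext i
          refine Fin.lastCases ?_ (fun i => ?_) i <;> simp [g, h0]
    · rintro (⟨μ, hμ, rfl⟩ | ⟨μ, hμ, rfl⟩)
      · simpa [tdS, Fin.sum_univ_castSucc, f] using hμ
      · simp only [tdS, Set.mem_ofPred_eq, Fin.sum_univ_castSucc] at hμ
        simp only [tdS, Set.mem_ofPred_eq, Fin.sum_univ_castSucc, g, Fin.snoc_castSucc,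
            Fin.snoc_last]
        push_cast
        linarith
  have hD : Disjoint (f '' (tdS d (fun i => a i.castSucc) t))
      (g '' (tdS (d+1) a (t - a (Fin.last d)))) := by
    rw [Set.disjoint_left]
    rintro _ ⟨x, _, rfl⟩ ⟨y, _, h⟩
    have := congrFun h (Fin.last d)
    simp [f, g] at this
  rw [hU, Set.ncard_union_eq hD ((tdS_finite _ _ (fun i => hpos _) _).image _)
    ((tdS_finite _ _ hpos _).image _), Set.ncard_image_of_injective _ hf,
    Set.ncard_image_of_injective _ hg]

lemma key_upper (d : ℕ) : ∀ (a : Fin d → ℝ) (_ : ∀ i, 0 < a i) (A t : ℝ) (_ : 0 < A)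
    (_ : ∀ i, a i ≤ A) (_ : A ≤ t),
    (t + A * d) * ∏ i : Fin d, ((t - A) / (a i * ((i : ℕ) + 1 : ℝ)) + 1)
      ≤ t * ∏ i : Fin d, (t / (a i * ((i : ℕ) + 1 : ℝ)) + 1) := by
  induction d with
  | zero => intro a _ A t _ _ _; simp
  | succ d ih =>
    intro a hpos A t hA hle ht
    have h := ih (fun i => a i.castSucc) (fun i => hpos _) A t hA (fun i => hle _) ht
    rw [Fin.prod_univ_castSucc, Fin.prod_univ_castSucc]
    simp only [Fin.val_castSucc, Fin.val_last]
    have hP' : 0 ≤ ∏ i : Fin d, ((t - A) / (a i.castSucc * ((i : ℕ) + 1 : ℝ)) + 1) := by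
      refine Finset.prod_nonneg fun i _ => ?_
      have := hpos i.castSucc
      have : 0 ≤ t - A := by linarith
      positivity
    set P' := ∏ i : Fin d, ((t - A) / (a i.castSucc * ((i : ℕ) + 1 : ℝ)) + 1)
    set P := ∏ i : Fin d, (t / (a i.castSucc * ((i : ℕ) + 1 : ℝ)) + 1)
    have hc : 0 < a (Fin.last d) * ((d : ℝ) + 1) := by
      have := hpos (Fin.last d)
      positivity
    have hcA : a (Fin.last d) * ((d : ℝ) + 1) ≤ A * ((d : ℝ) + 1) :=
      mul_le_mul_of_nonneg_right (hle _) (by positivity)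
    set c := a (Fin.last d) * ((d : ℝ) + 1)
    have hp : 0 ≤ t / c + 1 := by
      have : 0 ≤ t := by linarith
      positivity
    have h2 : (t + A * ((d : ℝ) + 1)) * ((t - A) / c + 1) ≤ (t + A * d) * (t / c + 1) := by
      have e1 : (t - A) / c + 1 = (t - A + c) / c := by field_simp
      have e2 : t / c + 1 = (t + c) / c := by field_simp
      rw [e1, e2, ← mul_div_assoc, ← mul_div_assoc]
      apply div_le_div_of_nonneg_right _ hc.le
      nlinarith [mul_le_mul_of_nonneg_left hcA hA.le]
    push_cast
    calc _ = P' * ((t + A * ((d : ℝ) + 1)) * ((t - A) / c + 1)) := by ring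
      _ ≤ P' * ((t + A * d) * (t / c + 1)) := mul_le_mul_of_nonneg_left h2 hP'
      _ = ((t + A * d) * P') * (t / c + 1) := by ring
      _ ≤ (t * P) * (t / c + 1) := mul_le_mul_of_nonneg_right h hp
      _ = _ := by ring

lemma upper (d : ℕ) : ∀ (a : Fin d → ℝ) (_ : ∀ i, 0 < a i) (_ : Monotone a) (t : ℝ) (_ : 0 ≤ t),
    ((tdS d a t).ncard : ℝ) ≤ ∏ i : Fin d, (t / (a i * ((i : ℕ) + 1 : ℝ)) + 1) := by
  induction d with
  | zero => intro a _ _ t ht; simp [tdS_zero a t ht]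
  | succ d ih =>
    intro a hpos hmono
    have hA := hpos (Fin.last d)
    have main : ∀ n : ℕ, ∀ t : ℝ, 0 ≤ t → t < n * a (Fin.last d) →
        ((tdS (d+1) a t).ncard : ℝ)
          ≤ ∏ i : Fin (d+1), (t / (a i * ((i : ℕ) + 1 : ℝ)) + 1) := by
      intro n
      induction n with
      | zero => intro t h1 h2; simp at h2; linarith
      | succ n ihn =>
        intro t h0 hn
        rw [tdS_rec d a hpos t]
        have hd := ih (fun i => a i.castSucc) (fun i => hpos _)
          (fun i j hij => hmono (by simpa using hij)) t h0
        push_cast at hn ⊢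
        rw [Fin.prod_univ_castSucc]
        simp only [Fin.val_castSucc, Fin.val_last]
        have hP : 0 ≤ ∏ i : Fin d, (t / (a i.castSucc * ((i : ℕ) + 1 : ℝ)) + 1) := by
          refine Finset.prod_nonneg fun i _ => ?_
          have := hpos i.castSucc
          positivity
        by_cases hlt : t < a (Fin.last d)
        · rw [tdS_neg _ a hpos _ (by linarith)]
          have : 0 ≤ t / (a (Fin.last d) * ((d : ℝ) + 1)) := by positivity
          push_cast
          nlinarith
        · push Not at hlt
          have h2 := ihn (t - a (Fin.last d)) (by linarith) (by linarith)
          have hk := key_upper d (fun i => a i.castSucc) (fun i => hpos _) _ t hA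
            (fun i => hmono (Fin.le_last _)) hlt
          rw [Fin.prod_univ_castSucc] at h2
          simp only [Fin.val_castSucc, Fin.val_last] at h2
          set P' := ∏ i : Fin d, ((t - a (Fin.last d)) / (a i.castSucc * ((i : ℕ) + 1 : ℝ)) + 1)
          set P := ∏ i : Fin d, (t / (a i.castSucc * ((i : ℕ) + 1 : ℝ)) + 1)
          set A := a (Fin.last d)
          refine (add_le_add hd h2).trans ?_
          have e1 : P' * ((t - A) / (A * ((d : ℝ) + 1)) + 1)
              = ((t + A * d) * P') / (A * ((d : ℝ) + 1)) := by
            field_simp; ring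
          have e2 : P * (t / (A * ((d : ℝ) + 1)) + 1)
              = P + (t * P) / (A * ((d : ℝ) + 1)) := by
            field_simp; ring
          rw [e1, e2]
          gcongr
    intro t ht
    obtain ⟨n, hn⟩ := exists_nat_gt (t / a (Fin.last d))
    exact main n t ht (by rwa [div_lt_iff₀ hA] at hn)

lemma pow_key (d : ℕ) (s t : ℝ) (hs : 0 ≤ s) (hst : s ≤ t) :
    t ^ (d+1) - s ^ (d+1) ≤ (d + 1) * (t - s) * t ^ d := by
  induction d with
  | zero => simp
  | succ d ih =>
    have h1 : s ^ (d+1) ≤ t ^ (d+1) := by gcongr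
    have ht : 0 ≤ t := hs.trans hst
    have h2 := mul_le_mul_of_nonneg_left ih ht
    have h3 := mul_le_mul_of_nonneg_right h1 (sub_nonneg.2 hst)
    push_cast
    calc _ = t * (t ^ (d+1) - s ^ (d+1)) + s ^ (d+1) * (t - s) := by ring
      _ ≤ t * ((d + 1) * (t - s) * t ^ d) + t ^ (d+1) * (t - s) := add_le_add h2 h3
      _ = _ := by ring

lemma lower (d : ℕ) : ∀ (a : Fin d → ℝ) (_ : ∀ i, 0 < a i) (t : ℝ) (_ : 0 ≤ t),
    t ^ d * ∏ i : Fin d, (1 / (a i * ((i : ℕ) + 1 : ℝ))) ≤ ((tdS d a t).ncard : ℝ) := by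
  induction d with
  | zero => intro a _ t ht; simp [tdS_zero a t ht]
  | succ d ih =>
    intro a hpos
    have hA := hpos (Fin.last d)
    have main : ∀ n : ℕ, ∀ t : ℝ, 0 ≤ t → t < n * a (Fin.last d) →
        t ^ (d+1) * ∏ i : Fin (d+1), (1 / (a i * ((i : ℕ) + 1 : ℝ)))
          ≤ ((tdS (d+1) a t).ncard : ℝ) := by
      intro n
      induction n with
      | zero => intro t h1 h2; simp at h2; linarith
      | succ n ihn =>
        intro t h0 hn
        rw [tdS_rec d a hpos t]
        have hd := ih (fun i => a i.castSucc) (fun i => hpos _) t h0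
        push_cast at hn ⊢
        have hP : 0 ≤ ∏ i : Fin d, (1 / (a i.castSucc * ((i : ℕ) + 1 : ℝ))) := by
          refine Finset.prod_nonneg fun i _ => ?_
          have := hpos i.castSucc
          positivity
        rw [Fin.prod_univ_castSucc] at ihn ⊢
        simp only [Fin.val_castSucc, Fin.val_last] at ihn ⊢
        set P := ∏ i : Fin d, (1 / (a i.castSucc * ((i : ℕ) + 1 : ℝ)))
        by_cases hlt : t < a (Fin.last d)
        · rw [tdS_neg _ a hpos _ (by linarith)]
          have h1 : t / (a (Fin.last d) * ((d : ℝ) + 1)) ≤ 1 := by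
            rw [div_le_one (by positivity)]
            have : (0 : ℝ) ≤ d := Nat.cast_nonneg d
            nlinarith
          have h2 : 0 ≤ t ^ d * P := by positivity
          have := mul_le_mul_of_nonneg_left h1 h2
          push_cast
          calc _ = t ^ d * P * (t / (a (Fin.last d) * ((d : ℝ) + 1))) := by ring
            _ ≤ _ := by linarith
        · push Not at hlt
          have h2 := ihn (t - a (Fin.last d)) (by linarith) (by linarith)
          have hk := pow_key d (t - a (Fin.last d)) t (by linarith) (by linarith)
          set A := a (Fin.last d)
          refine le_trans ?_ (add_le_add hd h2)
          have hQ : 0 ≤ P * (1 / (A * ((d : ℝ) + 1))) := by positivity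
          have h3 := mul_le_mul_of_nonneg_right hk hQ
          have e : ((d : ℝ) + 1) * (t - (t - A)) * t ^ d * (P * (1 / (A * ((d : ℝ) + 1))))
              = t ^ d * P := by
            field_simp; ring
          rw [e] at h3
          linarith
    intro t ht
    obtain ⟨n, hn⟩ := exists_nat_gt (t / a (Fin.last d))
    exact main n t ht (by rwa [div_lt_iff₀ hA] at hn)

/-- **Lower and upper size bounds for anisotropic total degree index sets.**
For `0 < a_1 ≤ ⋯ ≤ a_d`, the set `Λ = {ν ∈ ℕ_0^d : ∑ a_i ν_i ≤ 1}` is finite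
and `∏_{i=1}^d 1/(a_i i) ≤ |Λ| ≤ ∏_{i=1}^d (1/(a_i i) + 1)`. -/
theorem anisotropicTD_card_bounds
    (d : ℕ) (hd : 1 ≤ d) (a : Fin d → ℝ)
    (hpos : ∀ i, 0 < a i) (hmono : Monotone a) :
    {ν : Fin d → ℕ | ∑ i, a i * (ν i : ℝ) ≤ 1}.Finite ∧
    (∏ i : Fin d, 1 / (a i * ((i : ℕ) + 1 : ℝ)))
        ≤ ({ν : Fin d → ℕ | ∑ i, a i * (ν i : ℝ) ≤ 1}.ncard : ℝ) ∧
    ({ν : Fin d → ℕ | ∑ i, a i * (ν i : ℝ) ≤ 1}.ncard : ℝ)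
        ≤ ∏ i : Fin d, (1 / (a i * ((i : ℕ) + 1 : ℝ)) + 1) := by
  refine ⟨tdS_finite d a hpos 1, ?_, upper d a hpos hmono 1 zero_le_one⟩
  have := lower d a hpos 1 zero_le_one
  rw [one_pow, one_mul] at this
  exact this
end

section
/- Let λ = (λ_i)_{i≥1} be a nonincreasing sequence of positive real numbers, let ε > 0, and let n ≥ 1 be an integer. Then the set S(ε, n) := {γ ∈ Γ : Σ_{i≥1} γ_i/λ_i ≤ ε^{−2} and γ_i = 0 for all i > n} is finite and its cardinality satisfies |S(ε, n)| ≥ ∏_{i=1}^{n} λ_i/(ε² · i). -/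
open Finset

def AA (a : ℕ+ → ℝ) (s : Finset ℕ+) (T : ℝ) : Set (ℕ+ →₀ ℕ) :=
  {γ | (∑ i ∈ s, (γ i : ℝ) * a i) ≤ T ∧ γ.support ⊆ s}

lemma AA_finite (a : ℕ+ → ℝ) (ha : ∀ i, 0 < a i) (s : Finset ℕ+) (T : ℝ) :
    (AA a s T).Finite := by
  classical
  refine (Set.finite_Iic (Finsupp.indicator s (fun i _ => ⌈T / a i⌉₊))).subset ?_
  rintro γ ⟨h1, h2⟩
  intro i
  by_cases hi : i ∈ s
  · rw [Finsupp.indicator_of_mem hi]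
    have h3 : (γ i : ℝ) * a i ≤ ∑ i ∈ s, (γ i : ℝ) * a i :=
      Finset.single_le_sum (f := fun i => (γ i : ℝ) * a i)
        (fun j _ => mul_nonneg (Nat.cast_nonneg _) (ha j).le) hi
    have h4 : (γ i : ℝ) ≤ T / a i := by
      rw [le_div_iff₀ (ha i)]; linarith
    exact_mod_cast h4.trans (Nat.le_ceil _)
  · have : γ i = 0 := by
      by_contra h
      exact hi (h2 (Finsupp.mem_support_iff.2 h))
    rw [this]; exact Nat.zero_le _

lemma pow_diff (x a : ℝ) (ha : 0 ≤ a) (hx : a ≤ x) (m : ℕ) :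
    x ^ (m + 1) - (x - a) ^ (m + 1) ≤ (m + 1) * a * x ^ m := by
  induction m with
  | zero => simp
  | succ k ih =>
    have h1 : (x - a) ^ (k + 1) ≤ x ^ (k + 1) :=
      pow_le_pow_left₀ (by linarith) (by linarith) _
    have h2 := mul_le_mul_of_nonneg_left ih (ha.trans hx)
    have h3 := mul_le_mul_of_nonneg_left h1 ha
    push_cast
    have e1 : x ^ (k + 1 + 1) - (x - a) ^ (k + 1 + 1)
      = x * (x ^ (k + 1) - (x - a) ^ (k + 1)) + a * (x - a) ^ (k + 1) := by ring
    have e2 : ((k : ℝ) + 1 + 1) * a * x ^ (k + 1)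
      = x * ((k + 1) * a * x ^ k) + a * x ^ (k + 1) := by ring
    linarith

lemma AA_mono (a : ℕ+ → ℝ) (ha : ∀ i, 0 < a i) (s : Finset ℕ+) (j : ℕ+) (hj : j ∉ s) (T : ℝ) :
    AA a s T ⊆ AA a (insert j s) T := by
  rintro γ ⟨h1, h2⟩
  have h0 : γ j = 0 := by
    by_contra h
    exact hj (h2 (Finsupp.mem_support_iff.2 h))
  refine ⟨?_, h2.trans (Finset.subset_insert _ _)⟩
  rw [Finset.sum_insert hj, h0]; simpa using h1

lemma AA_rec (a : ℕ+ → ℝ) (ha : ∀ i, 0 < a i) (s : Finset ℕ+) (j : ℕ+) (hj : j ∉ s) (T : ℝ) :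
    (AA a s T).ncard + (AA a (insert j s) (T - a j)).ncard ≤ (AA a (insert j s) T).ncard := by
  classical
  set f : (ℕ+ →₀ ℕ) → (ℕ+ →₀ ℕ) := fun γ => γ + Finsupp.single j 1 with hf
  have hinj : Function.Injective f := fun x y h => add_right_cancel h
  rw [← Set.ncard_image_of_injective (AA a (insert j s) (T - a j)) hinj, ← Set.ncard_union_eq _ (AA_finite a ha _ _)
    ((AA_finite a ha _ _).image _)]
  · refine Set.ncard_le_ncard ?_ (AA_finite a ha _ _)
    refine Set.union_subset (AA_mono a ha s j hj T) ?_
    rintro _ ⟨γ, ⟨h1, h2⟩, rfl⟩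
    refine ⟨?_, ?_⟩
    · rw [Finset.sum_insert hj] at h1 ⊢
      have : ∑ i ∈ s, ((f γ) i : ℝ) * a i = ∑ i ∈ s, (γ i : ℝ) * a i := by
        refine Finset.sum_congr rfl fun i hi => ?_
        have : j ≠ i := fun h => hj (h ▸ hi)
        simp [hf, Finsupp.single_apply, this]
      rw [this]
      simp only [hf, Finsupp.add_apply, Finsupp.single_eq_same]
      push_cast
      linarith
    · refine Finsupp.support_add.trans (Finset.union_subset h2 ?_)
      exact Finsupp.support_single_subset.trans (by simp)
  · rw [Set.disjoint_left]
    rintro _ ⟨_, h2⟩ ⟨γ, _, rfl⟩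
    exact hj (h2 (by simp [hf]))

lemma AA_bound (a : ℕ+ → ℝ) (ha : ∀ i, 0 < a i) (s : Finset ℕ+) :
    ∀ T : ℝ, 0 ≤ T → (∏ i ∈ s, (a i)⁻¹) * T ^ s.card / (s.card.factorial : ℝ)
      ≤ ((AA a s T).ncard : ℝ) := by
  classical
  induction s using Finset.induction_on with
  | empty =>
    intro T hT
    have : AA a ∅ T = {0} := by
      ext γ
      simp [AA, hT]
    simp [this]
  | insert j s hj ih =>
    have hC : 0 < (∏ i ∈ s, (a i)⁻¹) := Finset.prod_pos fun i _ => inv_pos.2 (ha i)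
    have hF : (0 : ℝ) < (s.card.factorial : ℝ) := by exact_mod_cast Nat.factorial_pos _
    have haj := ha j
    rw [Finset.prod_insert hj, Finset.card_insert_of_notMem hj, Nat.factorial_succ]
    set C := (∏ i ∈ s, (a i)⁻¹) with hCdef
    set m := s.card with hm
    push_cast
    have hm0 : (0 : ℝ) < (m : ℝ) + 1 := by positivity
    set D := C / m.factorial / ((m + 1) * a j) with hD
    have hD0 : 0 < D := by positivity
    have eq1 : ∀ x : ℝ, (a j)⁻¹ * C * x / (((m : ℝ) + 1) * m.factorial) = D * x := by
      intro x; rw [hD]; field_simp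
    have eq2 : ∀ x : ℝ, C * x / m.factorial = D * ((m + 1) * a j * x) := by
      intro x; rw [hD]; field_simp
    simp only [eq1]
    simp only [eq2] at ih
    have key : ∀ k : ℕ, ∀ T : ℝ, 0 ≤ T → T < (k + 1) * a j →
        D * T ^ (m + 1) ≤ ((AA a (insert j s) T).ncard : ℝ) := by
      intro k
      have small : ∀ T : ℝ, 0 ≤ T → T < a j →
          D * T ^ (m + 1) ≤ ((AA a (insert j s) T).ncard : ℝ) := by
        intro T hT hTa
        have h1 : ((AA a s T).ncard : ℝ) ≤ ((AA a (insert j s) T).ncard : ℝ) := by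
          exact_mod_cast Set.ncard_le_ncard (AA_mono a ha s j hj T) (AA_finite a ha _ _)
        refine le_trans ?_ ((ih T hT).trans h1)
        refine mul_le_mul_of_nonneg_left ?_ hD0.le
        rw [pow_succ, mul_comm]
        refine mul_le_mul_of_nonneg_right ?_ (by positivity)
        have : (0 : ℝ) ≤ m * a j := by positivity
        linarith
      induction k with
      | zero =>
        intro T hT hTa
        exact small T hT (by simpa using hTa)
      | succ k ihk =>
        intro T hT hTa
        by_cases hlt : T < a j
        · exact small T hT hlt
        · push Not at hlt
          have h1 := ihk (T - a j) (by linarith) (by push_cast at hTa; linarith)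
          have h2 : ((AA a s T).ncard : ℝ) + ((AA a (insert j s) (T - a j)).ncard : ℝ)
              ≤ ((AA a (insert j s) T).ncard : ℝ) := by
            exact_mod_cast AA_rec a ha s j hj T
          have h3 := mul_le_mul_of_nonneg_left (pow_diff T (a j) haj.le hlt m) hD0.le
          have h4 := ih T hT
          rw [mul_sub] at h3
          linarith
    intro T hT
    refine key ⌊T / a j⌋₊ T hT ?_
    rw [← div_lt_iff₀ haj]
    exact Nat.lt_floor_add_one _

lemma prod_pnat (n : ℕ+) : ∏ i ∈ Finset.Icc (1 : ℕ+) n, (i : ℝ) = ((n : ℕ).factorial : ℝ) := by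
  have h2 : ∏ i ∈ Finset.Icc (1 : ℕ+) n, (i : ℝ) = ∏ i ∈ Finset.Icc (1 : ℕ) n, (i : ℝ) := by
    refine Finset.prod_bij (fun i _ => (i : ℕ)) ?_ ?_ ?_ ?_
    · intro i hi
      rw [Finset.mem_Icc] at hi ⊢
      exact ⟨i.pos, by exact_mod_cast hi.2⟩
    · intro i _ k _ h
      exact PNat.coe_injective h
    · intro b hb
      rw [Finset.mem_Icc] at hb
      exact ⟨Nat.toPNat b hb.1, Finset.mem_Icc.2 ⟨one_le, hb.2⟩, rfl⟩
    · intro i _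
      rfl
  rw [h2]
  generalize (n : ℕ) = k
  induction k with
  | zero => simp
  | succ k ih =>
    rw [Finset.prod_Icc_succ_top (by omega), ih, Nat.factorial_succ]
    push_cast
    ring

/-- **Lower size bound for `S(ε, n)`.**  For a nonincreasing positive sequence
`λ`, `ε > 0` and `n ≥ 1`, the set
`S(ε, n) = {γ : ∑ γ_i / λ_i ≤ ε⁻², supp(γ) ⊂ [n]}` is finite and its
cardinality is at least `∏_{i=1}^n λ_i / (ε² i)`. -/
theorem lower_size_bound_of_S
    (lam : ℕ+ → ℝ) (hpos : ∀ i, 0 < lam i) (hanti : Antitone lam)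
    (ε : ℝ) (hε : 0 < ε) (n : ℕ+) :
    {γ : MultiIndex | (∑ i ∈ γ.support, (γ i : ℝ) / lam i) ≤ (ε ^ 2)⁻¹ ∧
        ∀ i : ℕ+, n < i → γ i = 0}.Finite ∧
    (∏ i ∈ Finset.Icc (1 : ℕ+) n, lam i / (ε ^ 2 * (i : ℝ)))
      ≤ ({γ : MultiIndex | (∑ i ∈ γ.support, (γ i : ℝ) / lam i) ≤ (ε ^ 2)⁻¹ ∧
          ∀ i : ℕ+, n < i → γ i = 0}.ncard : ℝ) := by
  have hset : {γ : MultiIndex | (∑ i ∈ γ.support, (γ i : ℝ) / lam i) ≤ (ε ^ 2)⁻¹ ∧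
        ∀ i : ℕ+, n < i → γ i = 0}
      = AA (fun i => (lam i)⁻¹) (Finset.Icc 1 n) (ε ^ 2)⁻¹ := by
    ext γ
    have hs : (∀ i : ℕ+, n < i → γ i = 0) ↔ γ.support ⊆ Finset.Icc 1 n := by
      constructor
      · intro h i hi
        rw [Finset.mem_Icc]
        refine ⟨PNat.one_le _, ?_⟩
        by_contra hc
        exact (Finsupp.mem_support_iff.1 hi) (h i (not_le.1 hc))
      · intro h i hi
        by_contra hc
        exact absurd (Finset.mem_Icc.1 (h (Finsupp.mem_support_iff.2 hc))).2 (not_le.2 hi)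
    simp only [AA, Set.mem_setOf_eq, hs]
    refine and_congr_left fun h => ?_
    have : ∑ i ∈ γ.support, (γ i : ℝ) / lam i
        = ∑ i ∈ Finset.Icc 1 n, (γ i : ℝ) * (lam i)⁻¹ := by
      simp only [div_eq_mul_inv]
      refine Finset.sum_subset h fun i _ hi => ?_
      rw [Finsupp.notMem_support_iff.1 hi]; simp
    rw [this]
  have ha : ∀ i, 0 < (fun i => (lam i)⁻¹) i := fun i => inv_pos.2 (hpos i)
  rw [hset]
  refine ⟨AA_finite _ ha _ _, ?_⟩
  refine le_trans (le_of_eq ?_) (AA_bound _ ha (Finset.Icc 1 n) (ε ^ 2)⁻¹ (by positivity))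
  have hc : (Finset.Icc 1 n).card = (n : ℕ) := by simp
  rw [hc, ← prod_pnat n, Finset.prod_div_distrib, Finset.prod_mul_distrib, Finset.prod_const, hc]
  simp only [inv_inv, inv_pow]
  rw [div_mul_eq_div_div, div_eq_mul_inv (∏ i ∈ Finset.Icc 1 n, lam i)]
end

section
/- Let λ = (λ_i)_{i≥1} be a nonincreasing sequence of positive real numbers, let ε > 0, and let d ≥ 1 be an integer such that λ_i ≥ ε² for all 1 ≤ i ≤ d and λ_{d+1} < ε². Then the set S(ε) := {γ ∈ Γ : Σ_{i≥1} γ_i/λ_i ≤ ε^{−2}} is finite and its cardinality satisfies |S(ε)| ≤ (2·ε^{−2})^d · ∏_{i=1}^{d} λ_i. -/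
open Finset

/-- **Upper size bound for `S(ε)`.**  If `λ` is nonincreasing and positive with
`λ_i ≥ ε²` for `i ≤ d` and `λ_{d+1} < ε²`, then
`S(ε) = {γ : ∑ γ_i / λ_i ≤ ε⁻²}` is finite and
`|S(ε)| ≤ (2 ε⁻²)^d ∏_{i=1}^d λ_i`. -/
theorem upper_size_bound_of_S
    (lam : ℕ+ → ℝ) (hpos : ∀ i, 0 < lam i) (hanti : Antitone lam)
    (ε : ℝ) (hε : 0 < ε) (d : ℕ+)
    (hge : ∀ i : ℕ+, i ≤ d → ε ^ 2 ≤ lam i) (hlt : lam (d + 1) < ε ^ 2) :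
    {γ : MultiIndex | (∑ i ∈ γ.support, (γ i : ℝ) / lam i) ≤ (ε ^ 2)⁻¹}.Finite ∧
    ({γ : MultiIndex | (∑ i ∈ γ.support, (γ i : ℝ) / lam i) ≤ (ε ^ 2)⁻¹}.ncard : ℝ)
      ≤ (2 * (ε ^ 2)⁻¹) ^ (d : ℕ) * ∏ i ∈ Finset.Icc (1 : ℕ+) d, lam i := by
  have hε2 : (0:ℝ) < ε ^ 2 := by positivity
  set B : Finset MultiIndex :=
    (Finset.Icc (1 : ℕ+) d).finsupp (fun i => Finset.range (⌊lam i / ε ^ 2⌋₊ + 1)) with hB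
  have key : ∀ γ : MultiIndex, (∑ i ∈ γ.support, (γ i : ℝ) / lam i) ≤ (ε ^ 2)⁻¹ →
      ∀ i, (γ i : ℝ) ≤ lam i / ε ^ 2 := by
    intro γ hγ i
    by_cases hi : i ∈ γ.support
    · have h1 : (γ i : ℝ) / lam i ≤ ∑ i ∈ γ.support, (γ i : ℝ) / lam i :=
        Finset.single_le_sum (f := fun i => (γ i : ℝ) / lam i)
          (fun j _ => div_nonneg (Nat.cast_nonneg _) (hpos j).le) hi
      have h2 := h1.trans hγ
      rw [div_le_iff₀ (hpos i)] at h2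
      rw [div_eq_inv_mul]
      exact h2
    · have h0 : γ i = 0 := by simpa using hi
      rw [h0]
      have := hpos i
      simp only [Nat.cast_zero]
      positivity
  have hsub : {γ : MultiIndex | (∑ i ∈ γ.support, (γ i : ℝ) / lam i) ≤ (ε ^ 2)⁻¹} ⊆
      (B : Set MultiIndex) := by
    intro γ hγ
    have hk := key γ hγ
    rw [Finset.mem_coe, hB, Finset.mem_finsupp_iff]
    refine ⟨?_, ?_⟩
    · intro i hi
      rw [Finset.mem_Icc]
      refine ⟨PNat.one_le i, ?_⟩
      by_contra hcon
      have hdi : d + 1 ≤ i := PNat.add_one_le_iff.mpr (not_le.mp hcon)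
      have h1 : lam i < ε ^ 2 := (hanti hdi).trans_lt hlt
      have h2 : lam i / ε ^ 2 < 1 := (div_lt_one hε2).mpr h1
      have h3 : (1 : ℝ) ≤ (γ i : ℝ) := by
        exact_mod_cast Nat.one_le_iff_ne_zero.mpr (Finsupp.mem_support_iff.mp hi)
      linarith [hk i]
    · intro i _
      rw [Finset.mem_range, Nat.lt_succ_iff]
      exact Nat.le_floor (hk i)
  refine ⟨B.finite_toSet.subset hsub, ?_⟩
  have hcard := Set.ncard_le_ncard hsub B.finite_toSet
  rw [Set.ncard_coe_finset] at hcard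
  have hBc : (B.card : ℝ) ≤ ∏ i ∈ Finset.Icc (1 : ℕ+) d, (2 * (ε ^ 2)⁻¹ * lam i) := by
    rw [hB, Finset.card_finsupp, Nat.cast_prod]
    refine Finset.prod_le_prod (fun i _ => Nat.cast_nonneg _) ?_
    intro i hi
    have h1 : 1 ≤ lam i / ε ^ 2 := (one_le_div hε2).mpr (hge i (Finset.mem_Icc.mp hi).2)
    have h2 := Nat.floor_le (zero_le_one.trans h1)
    rw [Finset.card_range, Nat.cast_add, Nat.cast_one]
    have h3 : 2 * (ε ^ 2)⁻¹ * lam i = 2 * (lam i / ε ^ 2) := by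
      rw [div_eq_mul_inv]; ring
    rw [h3]
    linarith
  rw [Finset.prod_mul_distrib, Finset.prod_const, PNat.card_Icc] at hBc
  have hd : (d : ℕ) + 1 - ((1 : ℕ+) : ℕ) = d := by simp
  rw [hd] at hBc
  exact (Nat.cast_le.mpr hcard).trans hBc
end

section
/- Let α > 0 and λ_i := i^{−α} for every i ≥ 1, and for ε > 0 set S(ε) := {γ ∈ Γ : Σ_{i≥1} γ_i/λ_i ≤ ε^{−2}} (a finite set). Then for every δ > 0 and every η > 0 there exists ε̄ with 0 < ε̄ ≤ 2^{−α/2} such that for all ε with 0 < ε ≤ ε̄ one has log(|S(ε)|) ≤ η^{2(1/α + δ)} · ε^{−2/α − 2δ}. -/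
open Finset

/-- **Logarithmic size bound for `S(ε)` under algebraic spectral decay
`λ_i = i^{-α}`.**  For every `δ, η > 0` there exists `ε̄` with
`0 < ε̄ ≤ 2^{-α/2}` such that for all `0 < ε ≤ ε̄` the (finite) set
`S(ε) = {γ : ∑ γ_i / λ_i ≤ ε⁻²}` satisfies
`log |S(ε)| ≤ η^{2(1/α + δ)} ε^{-2/α - 2δ}`. -/
theorem log_size_bound_of_S_algebraic
    (α : ℝ) (hα : 0 < α)
    (lam : ℕ+ → ℝ) (hlam : ∀ i : ℕ+, lam i = (i : ℝ) ^ (-α))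
    (δ η : ℝ) (hδ : 0 < δ) (hη : 0 < η) :
    ∃ εbar : ℝ, 0 < εbar ∧ εbar ≤ 2 ^ (-α / 2 : ℝ) ∧
      ∀ ε : ℝ, 0 < ε → ε ≤ εbar →
        {γ : MultiIndex | (∑ i ∈ γ.support, (γ i : ℝ) / lam i) ≤ (ε ^ 2)⁻¹}.Finite ∧
        Real.log ({γ : MultiIndex |
              (∑ i ∈ γ.support, (γ i : ℝ) / lam i) ≤ (ε ^ 2)⁻¹}.ncard : ℝ)
          ≤ η ^ (2 * (1 / α + δ)) * ε ^ (-2 / α - 2 * δ) := by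
  have ho := isLittleO_log_rpow_atTop hδ
  have hc : 0 < η ^ (2 * (1 / α + δ)) / 2 ^ δ := by positivity
  have hev := ho.bound hc
  rw [Filter.eventually_atTop] at hev
  obtain ⟨X1, hX1⟩ := hev
  obtain ⟨X, hX0, hX⟩ : ∃ X : ℝ, 1 ≤ X ∧ X1 ≤ X := ⟨max 1 X1, le_max_left _ _, le_max_right _ _⟩
  refine ⟨min (2 ^ (-α / 2 : ℝ)) (1 / X), by positivity, min_le_left _ _, ?_⟩
  intro ε hε hεb
  have hεX : ε ≤ 1 / X := hεb.trans (min_le_right _ _)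
  obtain ⟨x, hx⟩ : ∃ x, x = (ε ^ 2)⁻¹ := ⟨_, rfl⟩
  rw [← hx]
  have hXx : X ≤ x := by
    have h1 : X ≤ ε⁻¹ := by
      rw [le_inv_comm₀ (by positivity) hε]; simpa using hεX
    rw [hx, ← inv_pow]
    nlinarith
  have hx1 : 1 ≤ x := hX0.trans hXx
  have hx0 : 0 < x := by linarith
  have hxr : x = ε ^ (-2 : ℝ) := by
    rw [hx, Real.rpow_neg hε.le]; norm_cast
  have hright : ε ^ (-2 / α - 2 * δ) = x ^ (1 / α) * x ^ δ := by
    rw [hxr, ← Real.rpow_mul hε.le, ← Real.rpow_mul hε.le, ← Real.rpow_add hε]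
    congr 1; ring
  have hn1 : 1 ≤ x ^ (1 / α) := Real.one_le_rpow hx1 (by positivity)
  obtain ⟨n, hn⟩ : ∃ n, n = ⌊x ^ (1 / α)⌋₊ := ⟨_, rfl⟩
  have hnpos : 0 < n := by rw [hn]; exact Nat.floor_pos.2 hn1
  let s : Finset ℕ+ := Finset.Icc 1 ⟨n, hnpos⟩
  let F : Finset MultiIndex := Finset.finsupp s (fun _ => Finset.range (⌊x⌋₊ + 1))
  have hcard : F.card = (⌊x⌋₊ + 1) ^ n := by
    have hs : s.card = n := by
      have h := PNat.card_Icc 1 ⟨n, hnpos⟩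
      have h2 : ((⟨n, hnpos⟩ : ℕ+) : ℕ) + 1 - ((1 : ℕ+) : ℕ) = n := by
        exact Nat.add_sub_cancel (n := n) (m := 1)
      exact h.trans h2
    simp only [F, Finset.card_finsupp, Finset.prod_const, Finset.card_range, hs]
  have hsub : {γ : MultiIndex | (∑ i ∈ γ.support, (γ i : ℝ) / lam i) ≤ x} ⊆ (F : Set MultiIndex) := by
    intro γ hγ
    have hγ' : (∑ i ∈ γ.support, (γ i : ℝ) / lam i) ≤ x := hγ
    have key : ∀ i ∈ γ.support, (γ i : ℝ) * (i : ℝ) ^ α ≤ x := by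
      intro i hi
      have h1 : (γ i : ℝ) * (i : ℝ) ^ α = (γ i : ℝ) / lam i := by
        rw [hlam, Real.rpow_neg (by positivity), div_inv_eq_mul]
      rw [h1]
      refine le_trans (Finset.single_le_sum (f := fun i => (γ i : ℝ) / lam i) ?_ hi) hγ'
      intro j _
      simp only [hlam]
      positivity
    have hi1 : ∀ i : ℕ+, (1 : ℝ) ≤ (i : ℝ) := fun i => by exact_mod_cast (one_le (a := i))
    have hia : ∀ i : ℕ+, (1 : ℝ) ≤ (i : ℝ) ^ α := fun i => Real.one_le_rpow (hi1 i) hα.le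
    rw [Finset.mem_coe, Finset.mem_finsupp_iff]
    constructor
    · intro i hi
      have hk := key i hi
      have hg : (1 : ℝ) ≤ γ i := by
        exact_mod_cast Nat.one_le_iff_ne_zero.2 (Finsupp.mem_support_iff.1 hi)
      have h2 : (i : ℝ) ^ α ≤ x := by nlinarith [hia i]
      have h3 : (i : ℝ) ≤ x ^ (1 / α) := by
        have := Real.rpow_le_rpow (by positivity) h2 (by positivity : 0 ≤ 1 / α)
        rwa [← Real.rpow_mul (by positivity), mul_one_div_cancel hα.ne', Real.rpow_one] at this
      refine Finset.mem_Icc.2 ⟨one_le, ?_⟩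
      have : (i : ℕ) ≤ n := by rw [hn]; exact Nat.le_floor h3
      exact this
    · intro i _
      rw [Finset.mem_range, Nat.lt_succ_iff]
      by_cases hi : i ∈ γ.support
      · have hk := key i hi
        apply Nat.le_floor
        have : (0 : ℝ) ≤ γ i := by positivity
        nlinarith [hia i]
      · rw [Finsupp.notMem_support_iff.1 hi]; exact Nat.zero_le _
  have hfin := F.finite_toSet.subset hsub
  refine ⟨hfin, ?_⟩
  have hpos : 0 < {γ : MultiIndex | (∑ i ∈ γ.support, (γ i : ℝ) / lam i) ≤ x}.ncard := by
    rw [Set.ncard_pos hfin]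
    exact ⟨0, by simpa using hx0.le⟩
  have hle := Set.ncard_le_ncard hsub F.finite_toSet
  rw [Set.ncard_coe_finset, hcard] at hle
  have hfl : (⌊x⌋₊ : ℝ) ≤ x := Nat.floor_le hx0.le
  have hnl : (n : ℝ) ≤ x ^ (1 / α) := by rw [hn]; exact Nat.floor_le (by positivity)
  have hlog : Real.log (2 * x) ≤ η ^ (2 * (1 / α + δ)) * x ^ δ := by
    have h := hX1 (2 * x) (by linarith)
    rw [Real.norm_of_nonneg (Real.log_nonneg (by linarith)), Real.norm_of_nonneg (by positivity),
      Real.mul_rpow (by norm_num) hx0.le] at h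
    refine h.trans (le_of_eq ?_)
    field_simp
  calc _ ≤ Real.log (((⌊x⌋₊ : ℝ) + 1) ^ n) :=
        Real.log_le_log (by exact_mod_cast hpos) (by exact_mod_cast hle)
    _ = n * Real.log ((⌊x⌋₊ : ℝ) + 1) := Real.log_pow _ _
    _ ≤ n * Real.log (2 * x) := by
        refine mul_le_mul_of_nonneg_left (Real.log_le_log (by positivity) (by linarith)) (by positivity)
    _ ≤ x ^ (1 / α) * (η ^ (2 * (1 / α + δ)) * x ^ δ) :=
        mul_le_mul hnl hlog (Real.log_nonneg (by linarith)) (by positivity)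
    _ = _ := by rw [hright]; ring
end

section
/- Let d ≥ 1 be an integer and γ, γ' ∈ ℕ_0^d two multi-indices. Then ∫_{ℝ^d} H̃_{γ,R,d}(x) · H̃_{γ',R,d}(x) dμ_d(x) → δ_{γ,γ'} as R → ∞, where δ_{γ,γ'} = 1 if γ = γ' and δ_{γ,γ'} = 0 otherwise, and μ_d is the d-fold product of the standard Gaussian measure N(0,1) on ℝ. -/
open Finset MeasureTheory ProbabilityTheory Filter

/-- The `n`-th normalized probabilist's Hermite polynomial: the monic
probabilist's Hermite polynomial divided by `√(n!)`. -/
noncomputable def normHermite (n : ℕ) (x : ℝ) : ℝ :=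
  (Polynomial.aeval x (Polynomial.hermite n)) / Real.sqrt (Nat.factorial n)

/-- The capped Hermite polynomial `H̃_{n,R}`. -/
noncomputable def cappedHermite (n : ℕ) (R : ℝ) (x : ℝ) : ℝ :=
  if x > R then normHermite n R
  else if x < -R then normHermite n (-R)
  else normHermite n x

open Polynomial in
lemma aux_int_abs (p : ℝ[X]) : Integrable (fun x : ℝ => p.eval |x|) (gaussianReal 0 1) := by
  induction p using Polynomial.induction_on' with
  | add p q hp hq =>
    refine (hp.add hq).congr (Eventually.of_forall fun x => ?_)
    simp
  | monomial n a =>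
    simp only [eval_monomial]
    apply Integrable.const_mul
    have h := (memLp_id_gaussianReal (μ := 0) (v := 1) (n : NNReal)).integrable_norm_pow'
    simpa using h

open Polynomial in
lemma aux_bound (p : ℝ[X]) : ∃ q : ℝ[X], ∀ x y : ℝ, |x| ≤ |y| → |p.eval x| ≤ q.eval |y| := by
  induction p using Polynomial.induction_on' with
  | add p q hp hq =>
    obtain ⟨a, ha⟩ := hp
    obtain ⟨b, hb⟩ := hq
    refine ⟨a + b, fun x y h => ?_⟩
    rw [eval_add, eval_add]
    exact (abs_add_le _ _).trans (add_le_add (ha x y h) (hb x y h))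
  | monomial n a =>
    refine ⟨monomial n |a|, fun x y h => ?_⟩
    simp only [eval_monomial, abs_mul, abs_pow]
    gcongr

open Polynomial in
lemma aux_int (p : ℝ[X]) : Integrable (fun x : ℝ => p.eval x) (gaussianReal 0 1) := by
  obtain ⟨q, hq⟩ := aux_bound p
  exact (aux_int_abs q).mono' p.continuous.aestronglyMeasurable
    (Eventually.of_forall fun x => hq x x le_rfl)

open Polynomial in
lemma aux_int_vol (p : ℝ[X]) : Integrable (fun x : ℝ => p.eval x * Real.exp (-(x^2/2))) := by
  have h := aux_int p
  rw [gaussianReal_of_var_ne_zero 0 one_ne_zero,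
    integrable_withDensity_iff (measurable_gaussianPDF 0 1)
      (Eventually.of_forall fun x => ENNReal.ofReal_lt_top)] at h
  have h2 := h.mul_const (Real.sqrt (2 * Real.pi))
  refine h2.congr (Eventually.of_forall fun x => ?_)
  have : Real.sqrt (2 * Real.pi) ≠ 0 := by positivity
  simp only [toReal_gaussianPDF, gaussianPDFReal]
  simp
  field_simp

open Polynomial in
lemma aux_integral (p : ℝ[X]) : ∫ x, p.eval x ∂(gaussianReal 0 1) =
    (Real.sqrt (2 * Real.pi))⁻¹ * ∫ x : ℝ, p.eval x * Real.exp (-(x^2/2)) := by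
  rw [integral_gaussianReal_eq_integral_smul one_ne_zero, ← integral_const_mul]
  congr 1
  ext x
  simp [gaussianPDFReal]
  ring_nf

open Polynomial in
lemma aux_stein (p : ℝ[X]) : ∫ x, (X * p).eval x ∂(gaussianReal 0 1) =
    ∫ x, (derivative p).eval x ∂(gaussianReal 0 1) := by
  rw [← sub_eq_zero, ← integral_sub (aux_int _) (aux_int _)]
  have : ∫ x, (X * p - derivative p).eval x ∂(gaussianReal 0 1) = 0 := by
    rw [aux_integral]
    rw [integral_eq_zero_of_hasDerivAt_of_integrable
      (f := fun x : ℝ => (-p).eval x * Real.exp (-(x^2/2))) ?_ (aux_int_vol _) (aux_int_vol _),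
      mul_zero]
    intro x
    have h1 := (-p).hasDerivAt x
    have h2 : HasDerivAt (fun x : ℝ => -(x^2/2)) (-x) x := by
      have := ((hasDerivAt_pow 2 x).div_const 2).neg
      refine this.congr_deriv ?_
      norm_num
    refine (h1.mul h2.exp).congr_deriv ?_
    simp only [derivative_neg, eval_neg, eval_sub, eval_mul, eval_X]
    ring
  simpa using this

open Polynomial in
noncomputable def rH (n : ℕ) : ℝ[X] := (hermite n).map (Int.castRingHom ℝ)

open Polynomial in
lemma rH_succ (n : ℕ) : rH (n+1) = X * rH n - derivative (rH n) := by
  simp [rH, hermite_succ]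

open Polynomial in
lemma aux_rec (n : ℕ) (q : ℝ[X]) : ∫ x, (rH n * q).eval x ∂(gaussianReal 0 1) =
    ∫ x, (derivative^[n] q).eval x ∂(gaussianReal 0 1) := by
  induction n generalizing q with
  | zero => simp [rH]
  | succ n ih =>
    rw [Function.iterate_succ_apply, ← ih]
    have e : rH (n+1) * q = X * (rH n * q) - derivative (rH n * q) + rH n * derivative q := by
      rw [rH_succ, derivative_mul]; ring
    have h := aux_stein (rH n * q)
    rw [e]
    simp only [eval_add (p := _ - _)]
    rw [integral_add (aux_int _) (aux_int _)]
    simp only [eval_sub]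
    rw [integral_sub (aux_int _) (aux_int _), h]
    simp

open Polynomial in
lemma aux_orth_le (n m : ℕ) (h : m ≤ n) : ∫ x, (rH n * rH m).eval x ∂(gaussianReal 0 1) =
    if n = m then (n.factorial : ℝ) else 0 := by
  rw [aux_rec]
  have hd : (rH m).natDegree = m := by
    rw [rH, (hermite_monic m).natDegree_map, natDegree_hermite]
  split_ifs with e
  · subst e
    have h0 : (derivative^[n] (rH n)).natDegree = 0 := by
      have := natDegree_iterate_derivative (rH n) n
      omega
    rw [eq_C_of_natDegree_eq_zero h0, coeff_iterate_derivative]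
    simp [rH, Nat.descFactorial_self]
  · rw [iterate_derivative_eq_zero (by omega)]
    simp

open Polynomial in
lemma aux_orth (n m : ℕ) : ∫ x, (rH n * rH m).eval x ∂(gaussianReal 0 1) =
    if n = m then (n.factorial : ℝ) else 0 := by
  rcases le_total m n with h | h
  · exact aux_orth_le n m h
  · rw [mul_comm, aux_orth_le m n h]
    by_cases e : n = m
    · simp [e]
    · simp [e, Ne.symm e]

lemma normHermite_eq (n : ℕ) (x : ℝ) :
    normHermite n x = (rH n).eval x / Real.sqrt (n.factorial) := by
  rw [normHermite, rH, Polynomial.eval_map, Polynomial.aeval_def]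
  rfl

lemma normHermite_orth (n m : ℕ) :
    ∫ x, normHermite n x * normHermite m x ∂(gaussianReal 0 1) = if n = m then 1 else 0 := by
  have h := aux_orth n m
  have : ∀ x, normHermite n x * normHermite m x =
      (rH n * rH m).eval x * (Real.sqrt (n.factorial) * Real.sqrt (m.factorial))⁻¹ := by
    intro x
    rw [normHermite_eq, normHermite_eq, Polynomial.eval_mul, div_mul_div_comm, div_eq_mul_inv]
  simp_rw [this]
  rw [integral_mul_const, h]
  split_ifs with e
  · subst e
    rw [Real.mul_self_sqrt (by positivity)]
    exact mul_inv_cancel₀ (by positivity)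
  · simp

lemma capped_measurable (n : ℕ) (R : ℝ) : Measurable (cappedHermite n R) := by
  have h : Measurable (normHermite n) := by
    have : normHermite n = fun x => (rH n).eval x / Real.sqrt (n.factorial) :=
      funext (normHermite_eq n)
    rw [this]
    exact ((rH n).continuous.div_const _).measurable
  exact Measurable.ite measurableSet_Ioi measurable_const
    (Measurable.ite measurableSet_Iio measurable_const h)

lemma capped_bound (n : ℕ) : ∃ q : Polynomial ℝ, ∀ R, 0 ≤ R → ∀ x : ℝ,
    |cappedHermite n R x| ≤ q.eval |x| := by
  obtain ⟨q, hq⟩ := aux_bound (rH n * Polynomial.C (Real.sqrt (n.factorial))⁻¹)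
  refine ⟨q, fun R hR x => ?_⟩
  have e : ∀ y, normHermite n y = (rH n * Polynomial.C (Real.sqrt (n.factorial))⁻¹).eval y := by
    intro y
    rw [normHermite_eq, Polynomial.eval_mul, Polynomial.eval_C, div_eq_mul_inv]
  unfold cappedHermite
  split_ifs with h1 h2 <;> rw [e] <;> apply hq
  · rw [abs_of_nonneg hR]; exact h1.le.trans (le_abs_self x)
  · rw [abs_neg, abs_of_nonneg hR]
    have := neg_le_abs x
    linarith
  · exact le_rfl

lemma capped_tendsto_one (n m : ℕ) :
    Tendsto (fun R : ℝ => ∫ x, cappedHermite n R x * cappedHermite m R x ∂(gaussianReal 0 1))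
      atTop (nhds (if n = m then 1 else 0)) := by
  rw [← normHermite_orth]
  obtain ⟨p, hp⟩ := capped_bound n
  obtain ⟨q, hq⟩ := capped_bound m
  refine tendsto_integral_filter_of_dominated_convergence (fun x => (p * q).eval |x|) ?_ ?_
    (aux_int_abs _) ?_
  · exact Eventually.of_forall fun R =>
      ((capped_measurable n R).mul (capped_measurable m R)).aestronglyMeasurable
  · filter_upwards [eventually_ge_atTop 0] with R hR
    refine Eventually.of_forall fun x => ?_
    rw [Real.norm_eq_abs, abs_mul, Polynomial.eval_mul]
    exact mul_le_mul (hp R hR x) (hq R hR x) (abs_nonneg _) ((abs_nonneg _).trans (hp R hR x))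
  · refine Eventually.of_forall fun x => ?_
    apply tendsto_const_nhds.congr'
    filter_upwards [eventually_ge_atTop |x|] with R hR
    have := abs_le.1 hR
    simp [cappedHermite, not_lt.2 this.1, not_lt.2 this.2]

/-- **Asymptotic orthonormality of capped Hermite products.**  For multi-indices
`γ, γ' ∈ ℕ_0^d`, `∫_{ℝ^d} H̃_{γ,R,d} · H̃_{γ',R,d} dμ_d → δ_{γ,γ'}` as `R → ∞`,
where `μ_d` is the `d`-fold product of the standard Gaussian measure. -/
theorem cappedHermite_asymptotic_orthonormality
    (d : ℕ) (hd : 1 ≤ d) (γ γ' : Fin d → ℕ) :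
    Tendsto
      (fun R : ℝ => ∫ x : Fin d → ℝ,
          (∏ i, cappedHermite (γ i) R (x i)) * (∏ i, cappedHermite (γ' i) R (x i))
          ∂(Measure.pi fun _ : Fin d => gaussianReal 0 1))
      atTop (nhds (if γ = γ' then (1 : ℝ) else 0)) := by
  simp_rw [← Finset.prod_mul_distrib]
  have h : ∀ R : ℝ, ∫ x : Fin d → ℝ,
      (∏ i, cappedHermite (γ i) R (x i) * cappedHermite (γ' i) R (x i))
        ∂(Measure.pi fun _ : Fin d => gaussianReal 0 1) =
      ∏ i, ∫ x, cappedHermite (γ i) R x * cappedHermite (γ' i) R x ∂(gaussianReal 0 1) :=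
    fun R => integral_fintype_prod_eq_prod
      (fun i x => cappedHermite (γ i) R x * cappedHermite (γ' i) R x)
  simp_rw [h]
  have h2 := tendsto_finsetProd Finset.univ
    (fun i _ => capped_tendsto_one (γ i) (γ' i))
  have e : (if γ = γ' then (1 : ℝ) else 0) = ∏ i, if γ i = γ' i then (1 : ℝ) else 0 := by
    rw [Finset.prod_ite_zero]
    simp [funext_iff]
  rw [e]
  exact h2
end
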